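/- The map Π from M_n to the monoid of transformations of the set of rotation classes of prime words over X_n is an injective monoid homomorphism: Π(TU) = Π(T) followed by Π(U) for all T, U ∈ M_n, and Π(T) = Π(U) implies T = U. -/

import Mathlib

/-!
Write `per c` for the sequence `c c c …` and call two sequences tail equivalent if they agree after
deleting finite prefixes. Rotation classes of prime words correspond to tail classes of periodic
sequences (`RotEq.tailEq`, `rotEq_of_tailEq`), and a strongly synchronizing transducer acts on tail
classes, independently of the initial state (`hmap_tailEq`). By `piAct_spec`, `Π(T)` is this action
on periodic sequences. Passing to the core, removing incomplete response and identifying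
ω-equivalent states do not change the action (`mulT_spec`), so `Π` is a homomorphism.

For injectivity, suppose that the maps `f`, `g` of two states of complete response, forced by a
common word, agree on periodic sequences up to tail equivalence. Choose circuits `a`, `b` such that
the images of `b …` under `f` and `g` leave those of `a a a …`, at positions `0` and `t`
respectively. For a circuit `v` and large `i`, let `c = a^i b v`. The long stretches `a^i` become
long stretches of period `|f(a)|` in the image of `per c` under `f`, of period `|g(a)|` under `g`,
and hence of period `r`, the product of the two, in both. Call `j` a break of a sequence `y` if
`y j ≠ y (j + r)`. If `j` is the first break after a long stretch without one, then `j + r` is the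
position where the image of `b v …` leaves that of `a a a …`. Tail equivalence therefore aligns
these positions (`break_data`, `match_breaks`, `align`), whence `f(b v …)` equals `g(b v …)`
without its first `t` letters. As `v` approximates an arbitrary sequence, prefixing a fixed word
of length `t` to `f(b x)` gives `g(b x)` for all `x`; complete response forces `f = g`
(`hmap_eq_of_tailEq`). Since every state is forced and states are determined by their maps, the
transducers are ω-equal. A degenerate transducer `Z_x` has a constant action, with value the class
of `x`, and the same breaks show that no other element of the monoid has one
(`not_const_of_disagree`).
-/

/-!
Common definitions: transducers over a finite alphabet, strong synchronization,
cores, ω-equivalence, minimal representatives, the monoids `M_n`, `SL_n`, `SO_n`,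
the groups `O_n`, `L_n`, annotations, and the two-sided full shift.

Throughout, the alphabet is `Fin (n + 2)`, i.e. an alphabet of size `n + 2 ≥ 2`.
-/

namespace ShiftPaper

/-- The alphabet with `n + 2` letters. -/
abbrev A (n : ℕ) : Type := Fin (n + 2)

/-- Finite words over the alphabet. -/
abbrev Word (n : ℕ) : Type := List (A n)

/-- A transducer over the alphabet `A n`: a finite nonempty set of states together with a
transition function `tr` and an output function `out` (possibly asynchronous). -/
structure Transducer (n : ℕ) where
  Q : Type
  fin : Finite Q
  ne : Nonempty Q
  tr : A n → Q → Q
  out : A n → Q → Word n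

variable {n : ℕ}

instance (T : Transducer n) : Finite T.Q := T.fin
instance (T : Transducer n) : Nonempty T.Q := T.ne

/-- Extended transition function, reading a finite word from left to right. -/
def dsts (T : Transducer n) : Word n → T.Q → T.Q
  | [], q => q
  | a :: w, q => dsts T w (T.tr a q)

/-- Extended output function along a finite word. -/
def outs (T : Transducer n) : Word n → T.Q → Word n
  | [], _ => []
  | a :: w, q => T.out a q ++ outs T w (T.tr a q)

/-- Every (nonempty) circuit in the transducer has nonempty output. -/
def CircuitsNonempty (T : Transducer n) : Prop :=
  ∀ (q : T.Q) (w : Word n), w ≠ [] → dsts T w q = q → outs T w q ≠ []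

/-- `T` is synchronizing at level `k`: the state reached after reading any word of
length `k` does not depend on the starting state. -/
def SyncAt (T : Transducer n) (k : ℕ) : Prop :=
  ∀ w : Word n, w.length = k → ∀ p q : T.Q, dsts T w p = dsts T w q

/-- `T` is strongly synchronizing: synchronizing at some level. -/
def StronglySync (T : Transducer n) : Prop := ∃ k, SyncAt T k

/-- The minimal synchronizing level (junk value `0` if `T` is not strongly synchronizing). -/
noncomputable def syncLevel (T : Transducer n) : ℕ := by
  classical
  exact if h : StronglySync T then Nat.find h else 0

/-- The infinite output stream produced from state `q` on reading the infinite input `x`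
(the map `h_q`).  (Well defined on transducers all of whose circuits have nonempty
output; junk values otherwise.) -/
noncomputable def hmap (T : Transducer n) (q : T.Q) (x : ℕ → A n) : ℕ → A n := fun m => by
  classical
  exact if h : ∃ k, m < (outs T ((List.range k).map x) q).length then
    (outs T ((List.range h.choose).map x) q).getD m default
  else default

/-- ω-equality of transducers: a bijection of the state sets under which corresponding
states induce the same maps on infinite sequences. -/
def OmegaEq (T U : Transducer n) : Prop :=
  ∃ f : T.Q ≃ U.Q, ∀ q, hmap T q = hmap U (f q)

/-- The setoid on states given by ω-equivalence of states. -/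
def omegaSetoid (T : Transducer n) : Setoid T.Q :=
  ⟨fun p q => hmap T p = hmap T q, ⟨fun _ => rfl, fun h => h.symm, fun h h' => h.trans h'⟩⟩

/-- The transducer obtained by identifying ω-equivalent states. -/
noncomputable def quotT (T : Transducer n) : Transducer n where
  Q := Quotient (omegaSetoid T)
  fin := Finite.of_surjective (Quotient.mk (omegaSetoid T))
    fun c => ⟨Quotient.out c, Quotient.out_eq c⟩
  ne := ⟨Quotient.mk (omegaSetoid T) (Classical.choice T.ne)⟩
  tr := fun a c => Quotient.mk (omegaSetoid T) (T.tr a (Quotient.out c))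
  out := fun a c => T.out a (Quotient.out c)

/-- `q` is a state of the core of `T`: it is forced by some word whose length is a
synchronizing level of `T`. -/
def CoreState (T : Transducer n) (q : T.Q) : Prop :=
  ∃ (k : ℕ) (w : Word n), SyncAt T k ∧ w.length = k ∧ ∀ p, dsts T w p = q

/-- `T` is core: it equals its core. -/
def IsCore (T : Transducer n) : Prop := ∀ q : T.Q, CoreState T q

/-- Auxiliary predicate used to make the core construction total. -/
def CoreStateE (T : Transducer n) (q : T.Q) : Prop :=
  CoreState T q ∨ ∀ p, ¬ CoreState T p

/-- The core of `T` (as a transducer). -/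
noncomputable def coreT (T : Transducer n) : Transducer n where
  Q := {q : T.Q // CoreStateE T q}
  fin := Subtype.finite
  ne := by
    classical
    by_cases h : ∀ p, ¬ CoreState T p
    · exact ⟨⟨Classical.choice T.ne, Or.inr h⟩⟩
    · push_neg at h
      obtain ⟨p, hp⟩ := h
      exact ⟨⟨p, Or.inl hp⟩⟩
  tr := fun a q => by
    classical
    exact if h : CoreStateE T (T.tr a q.1) then ⟨T.tr a q.1, h⟩ else q
  out := fun a q => T.out a q.1

/-- There exist two inputs whose outputs from `q` disagree at position `j`. -/
def Disagree (T : Transducer n) (q : T.Q) (j : ℕ) : Prop :=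
  ∃ x y : ℕ → A n, hmap T q x j ≠ hmap T q y j

/-- The extent of incomplete response of `q` (the length of `Λ(ε,q)`) is finite. -/
def FiniteExtent (T : Transducer n) (q : T.Q) : Prop := ∃ j, Disagree T q j

/-- The extent of incomplete response `|Λ(ε,q)|` of the state `q`
(junk value `0` when it is infinite). -/
noncomputable def extentLen (T : Transducer n) (q : T.Q) : ℕ := by
  classical
  exact if h : FiniteExtent T q then Nat.find h else 0

/-- The word `Λ(ε,q)`: the greatest common prefix of all outputs from `q`. -/
noncomputable def extentWord (T : Transducer n) (q : T.Q) : Word n :=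
  (List.range (extentLen T q)).map (hmap T q fun _ => default)

/-- `T` has no states of incomplete response (`Λ(ε,q) = ε` for every state `q`). -/
def NoIncomplete (T : Transducer n) : Prop := ∀ q : T.Q, Disagree T q 0

/-- No two distinct states of `T` are ω-equivalent. -/
def WeaklyMinimal (T : Transducer n) : Prop :=
  ∀ p q : T.Q, hmap T p = hmap T q → p = q

/-- The Lipschitz condition (SL3): around any circuit the output is as long as the input. -/
def SL3 (T : Transducer n) : Prop :=
  ∀ (q : T.Q) (Γ : Word n), dsts T Γ q = q → (outs T Γ q).length = Γ.length

/-- `T` is synchronous: it writes exactly one letter for each letter read. -/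
def Synchronous (T : Transducer n) : Prop :=
  ∀ (a : A n) (q : T.Q), (T.out a q).length = 1

/-- Boolean lexicographic comparison of words. -/
def lexLtB : Word n → Word n → Bool
  | [], [] => false
  | [], _ :: _ => true
  | _ :: _, [] => false
  | a :: u, b :: v => if a < b then true else if b < a then false else lexLtB u v

/-- The lexicographically least rotation of a word. -/
def minimalRot (w : Word n) : Word n :=
  ((List.range w.length).map fun i => w.rotate i).foldl
    (fun acc r => if lexLtB r acc then r else acc) w

/-- A nonempty word is prime if it is not a power of a strictly shorter word. -/
def IsPrime (w : Word n) : Prop :=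
  w ≠ [] ∧ ∀ (u : Word n) (k : ℕ), w = (List.replicate k u).flatten → w.length ≤ u.length

/-- `v` is a rotation of `u`. -/
def RotEq (u v : Word n) : Prop := ∃ i : ℕ, v = u.rotate i

/-- The prime word of which the (eventually constant single) image point of `T` is a power
(used for the degenerate transducers `Z_x`; junk values otherwise). -/
noncomputable def periodicRoot (T : Transducer n) : Word n := by
  classical
  exact
    if hp : ∃ m, 0 < m ∧ ∀ j, hmap T (Classical.choice T.ne) (fun _ => default) (j + m) =
        hmap T (Classical.choice T.ne) (fun _ => default) j
    then (List.range (Nat.find hp)).map (hmap T (Classical.choice T.ne) fun _ => default)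
    else [default]

/-- Remove the incomplete response from the states of `T`: replace the output `λ(a,q)` by
`Λ(a,q) - Λ(ε,q)`.  (In the degenerate case where the extents of incomplete response are
infinite, all outputs are replaced by the minimal rotation of the prime root of the unique
image point, so that minimising produces the transducer `Z_x` of the paper.) -/
noncomputable def removeIncomplete (T : Transducer n) : Transducer n where
  Q := T.Q
  fin := T.fin
  ne := T.ne
  tr := T.tr
  out := fun a q => by
    classical
    exact if ∀ p : T.Q, FiniteExtent T p then
      (T.out a q ++ extentWord T (T.tr a q)).drop (extentLen T q)
    else minimalRot (periodicRoot T)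

/-- The minimal representative `[T]` of a strongly synchronizing core transducer `T`:
remove incomplete response, take the core, and identify ω-equivalent states. -/
noncomputable def minRep (T : Transducer n) : Transducer n :=
  quotT (coreT (removeIncomplete T))

/-- The single state transducer `Z_x` which outputs `x` on every input letter. -/
def Zword (x : Word n) : Transducer n where
  Q := PUnit
  fin := inferInstance
  ne := ⟨PUnit.unit⟩
  tr := fun _ q => q
  out := fun _ _ => x

/-- The single state identity transducer. -/
def oneT : Transducer n where
  Q := PUnit
  fin := inferInstance
  ne := ⟨PUnit.unit⟩
  tr := fun _ q => q
  out := fun a _ => [a]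

/-- The product transducer `T * U`: the outputs of `T` are processed by `U`. -/
noncomputable def prodT (T U : Transducer n) : Transducer n where
  Q := T.Q × U.Q
  fin := inferInstance
  ne := ⟨⟨Classical.choice T.ne, Classical.choice U.ne⟩⟩
  tr := fun a p => (T.tr a p.1, dsts U (T.out a p.1) p.2)
  out := fun a p => outs U (T.out a p.1) p.2

/-- The product in `M_n`: the minimal representative of the core of `T * U`. -/
noncomputable def mulT (T U : Transducer n) : Transducer n :=
  minRep (coreT (prodT T U))

/-- Membership in the monoid `M_n` of minimal, strongly synchronizing, core transducers
(a transducer is minimal if it is core, has no states of incomplete response and no two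
distinct ω-equivalent states, or it is one of the degenerate transducers `Z_x` for a prime
word `x` which is least in its rotation class). -/
def MnMem (T : Transducer n) : Prop :=
  CircuitsNonempty T ∧ StronglySync T ∧ IsCore T ∧
    ((NoIncomplete T ∧ WeaklyMinimal T) ∨
      ∃ x : Word n, IsPrime x ∧ minimalRot x = x ∧ OmegaEq T (Zword x))

/-- Membership in the monoid `SL_n`: elements of `M_n` satisfying the Lipschitz condition. -/
def SLnMem (T : Transducer n) : Prop := MnMem T ∧ SL3 T

/-- Membership in the monoid `SO_n`: elements of `M_n` all of whose states induce injective
maps with clopen image. -/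
def SOnMem (T : Transducer n) : Prop :=
  MnMem T ∧ ∀ q : T.Q, Function.Injective (hmap T q) ∧ IsClopen (Set.range (hmap T q))

/-- Membership in the group `O_n`: invertible elements of `SO_n` (with inverse in `SO_n`);
equality in `M_n` is ω-equality. -/
def OnMem (T : Transducer n) : Prop :=
  SOnMem T ∧ ∃ U : Transducer n, SOnMem U ∧ OmegaEq (mulT T U) oneT ∧ OmegaEq (mulT U T) oneT

/-- Membership in the group `L_n = O_n ∩ SL_n`. -/
def LnMem (T : Transducer n) : Prop := OnMem T ∧ SL3 T

/-- Membership in the monoid `\widetilde{P}_n` of weakly minimal, synchronous, strongly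
synchronizing core transducers. -/
def PtildeMem (T : Transducer n) : Prop :=
  CircuitsNonempty T ∧ StronglySync T ∧ IsCore T ∧ Synchronous T ∧ WeaklyMinimal T

/-- The product in `\widetilde{P}_n`: take the product transducer, identify ω-equivalent
states and take the core. -/
noncomputable def ptildeMul (P R : Transducer n) : Transducer n :=
  coreT (quotT (prodT P R))

/-- An annotation of (a strongly synchronizing core transducer satisfying the Lipschitz
condition) `T`. -/
def Annotation (T : Transducer n) (α : T.Q → ℤ) : Prop :=
  ∀ (q : T.Q) (Γ : Word n),
    α (dsts T Γ q) = α q + ((outs T Γ q).length : ℤ) - (Γ.length : ℤ)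

/-! ### The two-sided full shift -/

/-- The space of bi-infinite sequences over the alphabet `A n`. -/
abbrev FullShift (n : ℕ) : Type := ℤ → A n

/-- The `i`-th power of the shift map: `(shiftZ i x) j = x (j - i)`.
The shift `σ` itself is `shiftZ 1`. -/
def shiftZ (i : ℤ) (x : FullShift n) : FullShift n := fun j => x (j - i)

/-- The monoid of endomorphisms of the shift dynamical system: continuous maps on the
space of bi-infinite sequences commuting with the shift. -/
def EndShift (n : ℕ) : Type :=
  {f : FullShift n → FullShift n // Continuous f ∧ ∀ x, f (shiftZ 1 x) = shiftZ 1 (f x)}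

/-- The group of automorphisms of the shift dynamical system: homeomorphisms of the
space of bi-infinite sequences commuting with the shift. -/
def AutShift (n : ℕ) : Type :=
  {f : FullShift n → FullShift n // Continuous f ∧ (∀ x, f (shiftZ 1 x) = shiftZ 1 (f x)) ∧
    ∃ g : FullShift n → FullShift n, Continuous g ∧ (∀ x, g (f x) = x) ∧ ∀ x, f (g x) = x}

/-- The window `x_{i-k} … x_{i-1}` of a bi-infinite sequence. -/
def window (x : FullShift n) (i : ℤ) (k : ℕ) : Word n :=
  (List.range k).map fun j => x (i - (k : ℤ) + (j : ℤ))

/-- The state of `L` forced by the window `x_{i-k} … x_{i-1}`. -/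
noncomputable def forced (L : Transducer n) (k : ℕ) (x : FullShift n) (i : ℤ) : L.Q :=
  dsts L (window x i k) (Classical.choice L.ne)

/-- The output word written while processing the letter `x i`. -/
noncomputable def outAt (L : Transducer n) (k : ℕ) (x : FullShift n) (i : ℤ) : Word n :=
  L.out (x i) (forced L k x i)

/-- The defining specification of the map `(L, α) : X_n^ℤ → X_n^ℤ` induced by an annotated
transducer: for each index `i`, with `q` the state forced by `x_{i-k} … x_{i-1}` and
`w = λ(x_i, q)`, the word `w` occupies the coordinates `i + α q, …, i + α q + |w| - 1`
of the image sequence `y`. -/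
def SpecAt (L : Transducer n) (α : L.Q → ℤ) (k : ℕ) (x y : FullShift n) : Prop :=
  ∀ (i : ℤ) (j : ℕ), j < (outAt L k x i).length →
    y (i + α (forced L k x i) + (j : ℤ)) = (outAt L k x i).getD j default

/-- The map `(L, α) : X_n^ℤ → X_n^ℤ` induced by an annotated transducer. -/
noncomputable def inducedMap (L : Transducer n) (α : L.Q → ℤ) (k : ℕ) :
    FullShift n → FullShift n := fun x m => by
  classical
  exact if h : ∃ p : ℤ × ℕ, p.2 < (outAt L k x p.1).length ∧
      p.1 + α (forced L k x p.1) + (p.2 : ℤ) = m then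
    (outAt L k x h.choose.1).getD h.choose.2 default
  else default

/-- The map `κ` from the states of `T` to the states of its minimal representative. -/
noncomputable def kappa (T : Transducer n) (q : T.Q) : (minRep T).Q := by
  classical
  exact Quotient.mk (omegaSetoid (coreT (removeIncomplete T)))
    (if h : CoreStateE (removeIncomplete T) q then
      (⟨q, h⟩ : (coreT (removeIncomplete T)).Q)
    else Classical.choice (coreT (removeIncomplete T)).ne)

/-- The annotation `\overline{α + β}` of the product `LM` in `SL_n`: its value at the
state `κ (s, t)` is `α s + β t + |Λ(ε, (s,t))|`, the extent of incomplete response being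
computed in `core (L * M)`. -/
noncomputable def annProd (L M : Transducer n) (α : L.Q → ℤ) (β : M.Q → ℤ) :
    (mulT L M).Q → ℤ := fun c =>
  α (Quotient.out c).1.1.1 + β (Quotient.out c).1.1.2 +
    (extentLen (coreT (prodT L M)) (Quotient.out c).1 : ℤ)

/-- The set `ASL_n` of annotated transducers: pairs of a transducer and an integer-valued
function on its states. -/
def ASLPair (n : ℕ) := Σ T : Transducer n, T.Q → ℤ

/-- Membership in `ASL_n`: either the transducer is in `SL_n` with no states of incomplete
response and the function is an annotation of it, or it is a degenerate `Z_a` for a letter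
`a` (whose `annotation ∞` we model by allowing an arbitrary function). -/
def ASLMem (p : ASLPair n) : Prop :=
  (SLnMem p.1 ∧ NoIncomplete p.1 ∧ Annotation p.1 p.2) ∨ ∃ a : A n, OmegaEq p.1 (Zword [a])

/-- Equality in `ASL_n`: ω-equality of the transducers matching up the annotations, with
the two elements possibly both being the degenerate `(Z_a, ∞)` for the same letter `a`. -/
def ASLEq (p q : ASLPair n) : Prop :=
  (∃ f : p.1.Q ≃ q.1.Q, (∀ s, hmap p.1 s = hmap q.1 (f s)) ∧ ∀ s, q.2 (f s) = p.2 s) ∨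
    ∃ a : A n, OmegaEq p.1 (Zword [a]) ∧ OmegaEq q.1 (Zword [a])

/-- The product on `ASL_n`: `(L, α)(M, β) = (LM, \overline{α + β})`. -/
noncomputable def ASLmul (p q : ASLPair n) : ASLPair n :=
  ⟨mulT p.1 q.1, annProd p.1 q.1 p.2 q.2⟩

/-- The identity `(1, 0)` of `ASL_n`. -/
def ASLone : ASLPair n := ⟨oneT, fun _ => 0⟩

/-- Membership in `AL_n`: annotated elements of `L_n`. -/
def ALMem (p : ASLPair n) : Prop := LnMem p.1 ∧ Annotation p.1 p.2

/-- The element `([P], α)` of `ASL_n` with `α ((q) κ) = i + |Λ(ε, q)|`, associated to the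
endomorphism `σ^i ∘ f_P`. -/
noncomputable def phiPair (P : Transducer n) (i : ℤ) : ASLPair n :=
  ⟨minRep P, fun c => i + (extentLen P (Quotient.out c).1 : ℤ)⟩

/-- The unique state at the base of a circuit labelled `Γ` (junk value if there is none). -/
noncomputable def qcirc (T : Transducer n) (Γ : Word n) : T.Q := by
  classical
  exact if h : ∃ q, dsts T Γ q = q then h.choose else Classical.choice T.ne

/-- The prime root of a word: the prime word of which `w` is a power
(junk value `w` if there is none). -/
noncomputable def primeRoot (w : Word n) : Word n := by
  classical
  exact if h : ∃ u : Word n, IsPrime u ∧ ∃ k, w = (List.replicate k u).flatten then h.choose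
  else w

/-- The action of `T ∈ M_n` on (rotation classes of) prime words: `Γ` is sent to the prime
word of which `λ(Γ, q_Γ)` is a power, where `q_Γ` is the unique state with a circuit
labelled `Γ` based at it. -/
noncomputable def PiAct (T : Transducer n) (Γ : Word n) : Word n :=
  primeRoot (outs T Γ (qcirc T Γ))

/-- The cylinder set of one-sided infinite sequences with prefix `ν`. -/
def Cyl (ν : Word n) : Set (ℕ → A n) :=
  {x | ∀ (j : ℕ) (h : j < ν.length), x j = ν.get ⟨j, h⟩}

/-- `m_q = |B(q)|`: the least cardinality of a finite set of words whose cylinders are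
contained in, and together cover, the image of `h_q`. -/
noncomputable def mq (T : Transducer n) (q : T.Q) : ℕ :=
  sInf {m : ℕ | ∃ S : Finset (Word n), S.card = m ∧
    (∀ ν ∈ S, Cyl ν ⊆ Set.range (hmap T q)) ∧
    (⋃ ν ∈ S, Cyl ν) = Set.range (hmap T q)}

/-- The signature homomorphism `sig : O_n → (ℤ/(n-1))^×`, as an element of `ℤ/(n-1)`
(for our alphabet of size `n + 2`, the modulus is `n + 1`). -/
noncomputable def sigT (T : Transducer n) : ZMod (n + 1) :=
  (mq T (Classical.choice T.ne) : ZMod (n + 1))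


/-! ### Infinite sequences -/

/-- Infinite sequences over the alphabet. -/
abbrev Seq (n : ℕ) : Type := ℕ → A n

/-- The infinite sequence `w x` obtained by writing the finite word `w` in front of `x`. -/
def app : Word n → Seq n → Seq n
  | [], x => x
  | a :: w, x => fun m => Nat.casesOn m a (app w x)

/-- The prefix of length `k` of an infinite sequence. -/
def pre (x : Seq n) (k : ℕ) : Word n := (List.range k).map x

/-- The periodic sequence `c c c …` (junk for the empty word). -/
def per (c : Word n) : Seq n := fun m => c.getD (m % c.length) default

/-- Two infinite sequences are tail equivalent if deleting suitable (possibly different) numbers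
of initial letters makes them equal. -/
def TailEq (x y : Seq n) : Prop := ∃ a b, ∀ i, x (a + i) = y (b + i)

@[simp] lemma app_nil (x : Seq n) : app [] x = x := rfl

lemma app_append (u v : Word n) (x : Seq n) : app (u ++ v) x = app u (app v x) := by
  induction u with
  | nil => rfl
  | cons a u ih => simp [app, ih]

lemma app_ge (u : Word n) (x : Seq n) (j : ℕ) : app u x (u.length + j) = x j := by
  induction u with
  | nil => simp [app]
  | cons a u ih =>
    rw [show (a :: u).length + j = (u.length + j) + 1 by simp; omega]
    exact ih

lemma app_ge' (u : Word n) (x : Seq n) (j : ℕ) (h : u.length ≤ j) :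
    app u x j = x (j - u.length) := by
  obtain ⟨i, rfl⟩ := Nat.exists_eq_add_of_le h
  rw [app_ge]; simp

lemma app_lt (u : Word n) (x : Seq n) (j : ℕ) (h : j < u.length) :
    app u x j = u[j] := by
  induction u generalizing j with
  | nil => simp at h
  | cons a u ih =>
    cases j with
    | zero => rfl
    | succ j => exact ih j (by simpa using h)

lemma app_lt_indep (u : Word n) (x y : Seq n) (j : ℕ) (h : j < u.length) :
    app u x j = app u y j := by
  rw [app_lt u x j h, app_lt u y j h]

lemma app_congr (u : Word n) {x y : Seq n} {N : ℕ} (h : ∀ i < N, x i = y i) :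
    ∀ j < u.length + N, app u x j = app u y j := by
  intro j hj
  by_cases hl : j < u.length
  · exact app_lt_indep u x y j hl
  · rw [app_ge' u x j (by omega), app_ge' u y j (by omega)]
    exact h _ (by omega)

lemma app_inj_of_length {u v : Word n} {x y : Seq n} (hl : u.length = v.length)
    (h : app u x = app v y) : u = v ∧ x = y := by
  constructor
  · apply List.ext_getElem hl
    intro i h1 h2
    rw [← app_lt u x i h1, ← app_lt v y i h2, h]
  · funext j
    rw [← app_ge u x j, h, hl, app_ge]

@[simp] lemma pre_length (x : Seq n) (k : ℕ) : (pre x k).length = k := by simp [pre]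

lemma pre_getElem (x : Seq n) (k j : ℕ) (h : j < (pre x k).length) : (pre x k)[j] = x j := by
  simp [pre]

/-- The sequence `x` with its first `k` letters deleted. -/
def shift (x : Seq n) (k : ℕ) : Seq n := fun i => x (k + i)

lemma app_pre (x : Seq n) (k : ℕ) : app (pre x k) (shift x k) = x := by
  funext j
  by_cases h : j < k
  · rw [app_lt _ _ _ (by simpa using h), pre_getElem]
  · rw [app_ge' _ _ _ (by simpa using h)]
    simp only [shift, pre_length]
    congr 1; omega

lemma eq_app_of_prefix {u : Word n} {x : Seq n} (h : ∀ j (hj : j < u.length), x j = u[j]) :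
    x = app u (shift x u.length) := by
  funext j
  by_cases hj : j < u.length
  · rw [app_lt _ _ _ hj, h]
  · rw [app_ge' _ _ _ (by omega)]
    simp only [shift]
    congr 1; omega

lemma pre_app (u : Word n) (x : Seq n) : pre (app u x) u.length = u := by
  apply List.ext_getElem (by simp)
  intro i h1 h2
  rw [pre_getElem, app_lt _ _ _ h2]

lemma pre_add (x : Seq n) (k l : ℕ) : pre x (k + l) = pre x k ++ pre (shift x k) l := by
  apply List.ext_getElem (by simp)
  intro i h1 h2
  rw [pre_getElem, List.getElem_append]
  split_ifs with h
  · rw [pre_getElem]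
  · rw [pre_getElem]; simp only [shift]; congr 1; simp at h ⊢; omega

/-- If two words in front of sequences that range over families with varying first letter
always give the same sequence, then the words and the sequences are equal. -/
lemma app_cancel {ι : Type*} {u v : Word n} {F G : ι → Seq n} (h : ∀ i, app u (F i) = app v (G i))
    (hF : ∃ i j, F i 0 ≠ F j 0) (hG : ∃ i j, G i 0 ≠ G j 0) : u = v ∧ ∀ i, F i = G i := by
  have hl : u.length = v.length := by
    rcases lt_trichotomy u.length v.length with hlt | heq | hlt
    · obtain ⟨i, j, hij⟩ := hF
      refine absurd ?_ hij
      have h1 := app_ge u (F i) 0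
      have h2 := app_ge u (F j) 0
      rw [← h1, ← h2, h i, h j]
      exact app_lt_indep v _ _ _ (by simpa using hlt)
    · exact heq
    · obtain ⟨i, j, hij⟩ := hG
      refine absurd ?_ hij
      have h1 := app_ge v (G i) 0
      have h2 := app_ge v (G j) 0
      rw [← h1, ← h2, ← h i, ← h j]
      exact app_lt_indep u _ _ _ (by simpa using hlt)
  obtain ⟨i, -⟩ := hF
  exact ⟨(app_inj_of_length hl (h i)).1, fun j => (app_inj_of_length hl (h j)).2⟩

lemma per_add_length (c : Word n) (j : ℕ) : per c (j + c.length) = per c j := by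
  simp [per]

lemma per_lt (u : Word n) (j : ℕ) (h : j < u.length) : per u j = u[j] := by
  simp [per, Nat.mod_eq_of_lt h, h]

lemma per_eq_app (c : Word n) : per c = app c (per c) := by
  funext j
  by_cases h : j < c.length
  · rw [app_lt _ _ _ h, per_lt _ _ h]
  · rw [app_ge' _ _ _ (by omega), ← per_add_length c (j - c.length)]
    congr 1; omega

/-- `per c` is the only sequence `y` with `y = c y`. -/
lemma eq_per {c : Word n} (hc : c ≠ []) {y : Seq n} (h : y = app c y) : y = per c := by
  have hpos := List.length_pos_of_ne_nil hc
  funext j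
  induction j using Nat.strong_induction_on with
  | _ j ih =>
    by_cases hj : j < c.length
    · rw [h, app_lt _ _ _ hj, per_lt _ _ hj]
    · rw [h, per_eq_app, app_ge' _ _ _ (by omega), app_ge' _ _ _ (by omega)]
      exact ih _ (by omega)

lemma per_add_mul (c : Word n) (j k : ℕ) : per c (j + k * c.length) = per c j := by
  simp [per]

/-- The power `c c … c` with `k` factors. -/
def pw (c : Word n) (k : ℕ) : Word n := (List.replicate k c).flatten

@[simp] lemma pw_length (c : Word n) (k : ℕ) : (pw c k).length = k * c.length := by
  simp [pw]

lemma pw_succ (c : Word n) (k : ℕ) : pw c (k + 1) = c ++ pw c k := by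
  simp [pw, List.replicate_succ]

lemma pw_succ' (c : Word n) (k : ℕ) : pw c (k + 1) = pw c k ++ c := by
  simp [pw, List.replicate_succ']

lemma app_pw_per (c : Word n) (k : ℕ) : app (pw c k) (per c) = per c := by
  induction k with
  | zero => rfl
  | succ k ih => rw [pw_succ, app_append, ih, ← per_eq_app]

lemma per_pw {c : Word n} {k : ℕ} (h : pw c k ≠ []) : per (pw c k) = per c :=
  (eq_per h (app_pw_per c k).symm).symm

/-! ### Tail equivalence -/

lemma TailEq.refl (x : Seq n) : TailEq x x := ⟨0, 0, fun _ => rfl⟩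

lemma TailEq.symm {x y : Seq n} (h : TailEq x y) : TailEq y x := by
  obtain ⟨a, b, h⟩ := h
  exact ⟨b, a, fun i => (h i).symm⟩

lemma TailEq.trans {x y z : Seq n} (h : TailEq x y) (h' : TailEq y z) : TailEq x z := by
  obtain ⟨a, b, h⟩ := h
  obtain ⟨c, d, h'⟩ := h'
  refine ⟨a + c, d + b, fun i => ?_⟩
  rw [add_assoc, h, add_assoc d, ← h']
  congr 1; omega

lemma tailEq_app (u : Word n) (x : Seq n) : TailEq (app u x) x :=
  ⟨u.length, 0, fun i => by rw [app_ge, zero_add]⟩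

lemma tailEq_iff {x y : Seq n} (h : TailEq x y) :
    ∃ (u v : Word n) (z : Seq n), x = app u z ∧ y = app v z := by
  obtain ⟨a, b, h⟩ := h
  refine ⟨pre x a, pre y b, shift x a, (app_pre x a).symm, ?_⟩
  have : shift x a = shift y b := funext h
  rw [this, app_pre]

/-! ### Prime words and rotations -/

lemma per_rotate {u : Word n} (hu : u ≠ []) (i m : ℕ) :
    per (u.rotate i) m = per u (m + i) := by
  have hpos := List.length_pos_of_ne_nil hu
  have h1 : m % u.length < (u.rotate i).length := by simpa using Nat.mod_lt _ hpos
  have h2 : (m + i) % u.length < u.length := Nat.mod_lt _ hpos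
  unfold per
  rw [List.length_rotate, List.getD_eq_getElem _ _ h1, List.getD_eq_getElem _ _ h2,
    List.getElem_rotate]
  simp

lemma RotEq.tailEq {u v : Word n} (hu : u ≠ []) (h : RotEq u v) : TailEq (per u) (per v) := by
  obtain ⟨i, rfl⟩ := h
  refine ⟨i, 0, fun m => ?_⟩
  rw [per_rotate hu]; congr 1; omega

/-- The length of a prime word divides every period of the periodic sequence it spells. -/
lemma IsPrime.dvd_of_period {v : Word n} (hv : IsPrime v) {m : ℕ}
    (h : ∀ j, per v (j + m) = per v j) : v.length ∣ m := by
  obtain ⟨hne, hpr⟩ := hv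
  have hpos := List.length_pos_of_ne_nil hne
  have hmul : ∀ s j, per v (j + s * m) = per v j := by
    intro s
    induction s with
    | zero => simp
    | succ s ih => intro j; rw [Nat.succ_mul, ← add_assoc, h, ih]
  set g := Nat.gcd m v.length with hg
  have hgpos : 0 < g := Nat.gcd_pos_of_pos_right _ hpos
  -- by Bézout, the greatest common divisor of two periods is a period
  have hgper : ∀ j, per v (j + g) = per v j := by
    intro j
    rcases eq_or_lt_of_le (Nat.le_of_dvd hpos (Nat.gcd_dvd_right m v.length)) with he | hl
    · rw [hg, he, per_add_length]
    · obtain ⟨s, -, hs⟩ := Nat.exists_mul_mod_eq_gcd (n := m) (k := v.length) hl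
      have hs' := Nat.div_add_mod (m * s) v.length
      rw [hs, ← hg] at hs'
      have h1 := hmul s j
      rw [mul_comm s m, ← hs', mul_comm v.length, add_comm (_ * _) g, ← add_assoc,
        per_add_mul] at h1
      exact h1
  obtain ⟨q, hq⟩ : g ∣ v.length := Nat.gcd_dvd_right _ _
  have hw : (pre (per v) g) ≠ [] := by
    intro h0
    have := congrArg List.length h0
    simp at this; omega
  have hper : per v = per (pre (per v) g) := by
    refine eq_per hw ?_
    conv_lhs => rw [← app_pre (per v) g]
    congr 1
    funext j
    simp only [shift]; rw [add_comm, hgper]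
  have hvp : v = (List.replicate q (pre (per v) g)).flatten := by
    change v = pw _ q
    have hl : v.length = (pw (pre (per v) g) q).length := by
      rw [pw_length, pre_length, hq, mul_comm]
    have hq0 : pw (pre (per v) g) q ≠ [] := by
      apply List.ne_nil_of_length_pos; omega
    refine (app_inj_of_length (x := per v) (y := per v) hl ?_).1
    rw [← per_eq_app]
    conv_rhs => rw [hper, ← hper]
    conv_lhs => rw [hper, ← app_pw_per _ q, ← hper]
  have := hpr _ _ hvp
  rw [pre_length] at this
  have hgv : g = v.length :=
    le_antisymm (Nat.le_of_dvd hpos (Nat.gcd_dvd_right _ _)) this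
  rw [← hgv]; exact Nat.gcd_dvd_left _ _

lemma IsPrime.dvd_of_tailEq {u v : Word n} (hv : IsPrime v)
    (h : TailEq (per u) (per v)) : v.length ∣ u.length := by
  have hpos := List.length_pos_of_ne_nil hv.1
  obtain ⟨a, b, h⟩ := h
  apply hv.dvd_of_period
  intro j
  have hle : b ≤ b * v.length := Nat.le_mul_of_pos_right b hpos
  rw [← per_add_mul v j b, ← per_add_mul v (j + u.length) b]
  have e1 := h (j + (b * v.length - b))
  have e2 := h (j + u.length + (b * v.length - b))
  rw [show b + (j + (b * v.length - b)) = j + b * v.length by omega] at e1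
  rw [show b + (j + u.length + (b * v.length - b)) = j + u.length + b * v.length by omega] at e2
  rw [← e1, ← e2, ← per_add_length u (a + (j + (b * v.length - b)))]
  congr 1; omega

lemma rotEq_of_tailEq {u v : Word n} (hu : IsPrime u) (hv : IsPrime v)
    (h : TailEq (per u) (per v)) : RotEq u v := by
  have hpos := List.length_pos_of_ne_nil hv.1
  have hl : u.length = v.length :=
    Nat.dvd_antisymm (hu.dvd_of_tailEq h.symm) (hv.dvd_of_tailEq h)
  obtain ⟨a, b, h⟩ := h
  have hle : b ≤ b * v.length := Nat.le_mul_of_pos_right b hpos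
  refine ⟨a + (b * v.length - b), ?_⟩
  apply List.ext_getElem (by simp [hl])
  intro j h1 h2
  rw [← per_lt _ _ h1, ← per_lt _ _ h2, per_rotate hu.1]
  have e1 := h (j + (b * v.length - b))
  rw [show b + (j + (b * v.length - b)) = j + b * v.length by omega, per_add_mul] at e1
  rw [← e1]; congr 1; omega

lemma exists_primeRoot (w : Word n) (hw : w ≠ []) :
    ∃ u : Word n, IsPrime u ∧ ∃ k, w = (List.replicate k u).flatten := by
  induction h : w.length using Nat.strong_induction_on generalizing w with
  | _ l ih =>
    by_cases hp : IsPrime w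
    · exact ⟨w, hp, 1, by simp⟩
    · simp only [IsPrime, not_and, not_forall, not_le] at hp
      obtain ⟨u, k, huk, hlt⟩ := hp hw
      have hu : u ≠ [] := by
        rintro rfl
        apply hw; rw [huk]; simp
      obtain ⟨r, hr, m, hm⟩ := ih u.length (h ▸ hlt) u hu rfl
      refine ⟨r, hr, k * m, ?_⟩
      have key : ∀ k, pw (pw r m) k = pw r (k * m) := by
        intro k
        induction k with
        | zero => simp [pw]
        | succ k ihk =>
          rw [pw_succ, ihk]
          simp only [pw, ← List.flatten_append, List.replicate_append_replicate]
          congr 2; ring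
      rw [huk, hm]
      exact key k

lemma primeRoot_spec {w : Word n} (hw : w ≠ []) :
    IsPrime (primeRoot w) ∧ per w = per (primeRoot w) := by
  have h := exists_primeRoot w hw
  have e : primeRoot w = h.choose := by rw [primeRoot, dif_pos h]
  obtain ⟨hp, k, hk⟩ := h.choose_spec
  rw [e]
  refine ⟨hp, ?_⟩
  have hk' : w = pw h.choose k := hk
  have : per (pw h.choose k) = per h.choose := per_pw (by rw [← hk']; exact hw)
  rw [← this, ← hk']

/-! ### Words and sequences read by a transducer -/

/-- Output grows uniformly: long inputs give long outputs, from every state. -/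
def Growth (T : Transducer n) : Prop :=
  ∀ N, ∃ K, ∀ (w : Word n) (q : T.Q), K ≤ w.length → N ≤ (outs T w q).length

lemma dsts_append (T : Transducer n) (u v : Word n) (q : T.Q) :
    dsts T (u ++ v) q = dsts T v (dsts T u q) := by
  induction u generalizing q with
  | nil => rfl
  | cons a u ih => exact ih _

lemma outs_append (T : Transducer n) (u v : Word n) (q : T.Q) :
    outs T (u ++ v) q = outs T u q ++ outs T v (dsts T u q) := by
  induction u generalizing q with
  | nil => rfl
  | cons a u ih => simp [outs, dsts, ih]

lemma SyncAt.mono {T : Transducer n} {k l : ℕ} (h : SyncAt T k) (hkl : k ≤ l) : SyncAt T l := by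
  intro w hw p q
  rw [← List.take_append_drop (l - k) w, dsts_append, dsts_append]
  exact h _ (by simp [hw]; omega) _ _

/-- A word at least as long as the number of states traverses a circuit, hence has nonempty
output. -/
lemma outs_ne_nil_of_card_le {T : Transducer n} (hT : CircuitsNonempty T) (w : Word n) (q : T.Q)
    (hw : Nat.card T.Q ≤ w.length) : outs T w q ≠ [] := by
  have := Fintype.ofFinite T.Q
  have hcard : Fintype.card T.Q < Fintype.card (Fin (w.length + 1)) := by
    rw [Fintype.card_fin, ← Nat.card_eq_fintype_card]; omega
  obtain ⟨i, j, hij, he⟩ := Fintype.exists_ne_map_eq_of_card_lt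
    (fun i : Fin (w.length + 1) => dsts T (w.take i) q) hcard
  wlog hlt : i < j generalizing i j
  · exact this j i hij.symm he.symm (lt_of_le_of_ne (not_lt.1 hlt) hij.symm)
  have hj := j.2
  have hlt' : (i : ℕ) < j := hlt
  have e1 : w.take j = w.take i ++ (w.drop i).take (j - i) := by
    rw [← List.take_add]; congr 1; omega
  change dsts T (w.take i) q = dsts T (w.take j) q at he
  rw [e1, dsts_append] at he
  have hc := hT _ _ (by
    apply List.ne_nil_of_length_pos
    simp; omega) he.symm
  intro h0
  rw [← List.take_append_drop j w, outs_append, e1, outs_append] at h0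
  simp only [List.append_eq_nil_iff] at h0
  exact hc h0.1.2

lemma CircuitsNonempty.growth {T : Transducer n} (hT : CircuitsNonempty T) : Growth T := by
  intro N
  induction N with
  | zero => exact ⟨0, fun _ _ _ => Nat.zero_le _⟩
  | succ N ih =>
    obtain ⟨K, hK⟩ := ih
    refine ⟨K + Nat.card T.Q, fun w q hw => ?_⟩
    rw [← List.take_append_drop K w, outs_append, List.length_append]
    have h1 := hK (w.take K) q (by simp; omega)
    have h2 := List.length_pos_of_ne_nil
      (outs_ne_nil_of_card_le hT (w.drop K) (dsts T (w.take K) q) (by simp; omega))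
    omega

lemma outs_length_mono (T : Transducer n) (x : Seq n) (q : T.Q) {k l : ℕ} (h : k ≤ l) :
    ∃ v, outs T (pre x l) q = outs T (pre x k) q ++ v := by
  obtain ⟨m, rfl⟩ := Nat.exists_eq_add_of_le h
  rw [pre_add, outs_append]
  exact ⟨_, rfl⟩

lemma hmap_lt (T : Transducer n) (q : T.Q) (x : Seq n) (k m : ℕ)
    (h : m < (outs T (pre x k) q).length) : hmap T q x m = (outs T (pre x k) q)[m] := by
  have hex : ∃ k, m < (outs T ((List.range k).map x) q).length := ⟨k, h⟩
  have e : hmap T q x m = (outs T ((List.range hex.choose).map x) q).getD m default := by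
    rw [hmap, dif_pos hex]
  have hs := hex.choose_spec
  rw [e, List.getD_eq_getElem _ _ hs]
  change m < (outs T (pre x hex.choose) q).length at hs
  change (outs T (pre x hex.choose) q)[m] = _
  rcases le_total k hex.choose with hl | hl
  · obtain ⟨v, hv⟩ := outs_length_mono T x q hl
    simp only [hv]
    rw [List.getElem_append_left h]
  · obtain ⟨v, hv⟩ := outs_length_mono T x q hl
    simp only [hv]
    rw [List.getElem_append_left hs]

/-- The image sequence is characterized by its prefixes. -/
lemma hmap_eq {T : Transducer n} (hT : Growth T) (q : T.Q) (x y : Seq n)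
    (h : ∀ k, ∃ z, y = app (outs T (pre x k) q) z) : hmap T q x = y := by
  funext m
  obtain ⟨K, hK⟩ := hT (m + 1)
  have hl := hK (pre x K) q (by simp)
  obtain ⟨z, hz⟩ := h K
  rw [hmap_lt T q x K m hl, hz, app_lt _ _ _ hl]

lemma hmap_prefix (T : Transducer n) (q : T.Q) (x : Seq n) (k : ℕ) :
    ∃ z, hmap T q x = app (outs T (pre x k) q) z :=
  ⟨_, eq_app_of_prefix fun j hj => hmap_lt T q x k j hj⟩

lemma hmap_app {T : Transducer n} (hT : Growth T) (q : T.Q) (w : Word n) (x : Seq n) :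
    hmap T q (app w x) = app (outs T w q) (hmap T (dsts T w q) x) := by
  have key : ∀ k, pre (app w x) (w.length + k) = w ++ pre x k := by
    intro k
    rw [pre_add, pre_app]
    congr 2
    funext j; simp [shift, app_ge]
  apply hmap_eq hT
  intro k
  obtain ⟨z, hz⟩ := hmap_prefix T (dsts T w q) x k
  obtain ⟨v, hv⟩ := outs_length_mono T (app w x) q (Nat.le_add_left k w.length)
  rw [key, outs_append] at hv
  refine ⟨app v z, ?_⟩
  rw [hz, ← app_append, hv, app_append]

lemma hmap_per {T : Transducer n} (hT : Growth T) {q : T.Q} {c : Word n}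
    (hq : dsts T c q = q) (ho : outs T c q ≠ []) :
    hmap T q (per c) = per (outs T c q) := by
  apply eq_per ho
  conv_lhs => rw [per_eq_app c, hmap_app hT, hq]

lemma dsts_pw {T : Transducer n} {q : T.Q} {c : Word n} (hq : dsts T c q = q) (k : ℕ) :
    dsts T (pw c k) q = q := by
  induction k with
  | zero => rfl
  | succ k ih => rw [pw_succ, dsts_append, hq, ih]

lemma outs_pw {T : Transducer n} {q : T.Q} {c : Word n} (hq : dsts T c q = q) (k : ℕ) :
    outs T (pw c k) q = pw (outs T c q) k := by
  induction k with
  | zero => rfl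
  | succ k ih => rw [pw_succ, outs_append, hq, ih, pw_succ]

lemma Growth.outs_ne_nil {T : Transducer n} (hT : Growth T) {q : T.Q} {c : Word n}
    (hc : c ≠ []) (hq : dsts T c q = q) : outs T c q ≠ [] := by
  obtain ⟨K, hK⟩ := hT 1
  intro h0
  have := hK (pw c K) q (by
    rw [pw_length]; exact Nat.le_mul_of_pos_right K (List.length_pos_of_ne_nil hc))
  rw [outs_pw hq, h0] at this
  simp at this

/-- A strongly synchronizing transducer acts on tail equivalence classes, and the action does not
depend on the initial state. -/
lemma hmap_tailEq {T : Transducer n} (hS : StronglySync T) (hT : Growth T) {x y : Seq n}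
    (h : TailEq x y) (p q : T.Q) : TailEq (hmap T p x) (hmap T q y) := by
  obtain ⟨k, hk⟩ := hS
  obtain ⟨u, v, z, rfl, rfl⟩ := tailEq_iff h
  rw [← app_pre z k, hmap_app hT, hmap_app hT, hmap_app hT, hmap_app hT]
  refine (tailEq_app _ _).trans ((tailEq_app _ _).trans ?_)
  refine TailEq.trans ?_ ((tailEq_app _ _).trans (tailEq_app _ _)).symm
  rw [hk (pre z k) (by simp) (dsts T u p) (dsts T v q)]
  exact TailEq.refl _

/-- The state reached after a long power of `Γ` is fixed by `Γ`. -/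
lemma exists_circuit_state {T : Transducer n} (hS : StronglySync T) {Γ : Word n} (hΓ : Γ ≠ []) :
    ∃ q, dsts T Γ q = q := by
  obtain ⟨k, hk⟩ := hS
  have hk' : SyncAt T (pw Γ k).length := hk.mono (by
    rw [pw_length]; exact Nat.le_mul_of_pos_right k (List.length_pos_of_ne_nil hΓ))
  obtain ⟨p⟩ := T.ne
  refine ⟨dsts T (pw Γ k) p, ?_⟩
  rw [← dsts_append, ← pw_succ', pw_succ, dsts_append]
  exact hk' _ rfl _ _

/-- The word `PiAct T Γ` is prime, and the periodic sequence it spells represents the image of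
the tail class of `Γ Γ Γ …` under `T`. -/
lemma piAct_spec {T : Transducer n} (hS : StronglySync T) (hT : Growth T) {Γ : Word n}
    (hΓ : Γ ≠ []) : IsPrime (PiAct T Γ) ∧
      ∀ q, TailEq (hmap T q (per Γ)) (per (PiAct T Γ)) := by
  have hex := exists_circuit_state hS hΓ
  have e : qcirc T Γ = hex.choose := by rw [qcirc, dif_pos hex]
  have hc : dsts T Γ (qcirc T Γ) = qcirc T Γ := by rw [e]; exact hex.choose_spec
  have ho := hT.outs_ne_nil hΓ hc
  obtain ⟨h1, h2⟩ := primeRoot_spec ho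
  refine ⟨h1, fun q => (hmap_tailEq hS hT (TailEq.refl _) q (qcirc T Γ)).trans ?_⟩
  rw [hmap_per hT hc ho, h2]
  exact TailEq.refl _

/-! ### Product transducers -/

/-- The state `(p, q)` of the product transducer. -/
def pst (T U : Transducer n) (p : T.Q) (q : U.Q) : (prodT T U).Q := (p, q)

lemma pst_cases {T U : Transducer n} (r : (prodT T U).Q) : ∃ p q, r = pst T U p q :=
  ⟨r.1, r.2, rfl⟩

lemma dsts_prodT (T U : Transducer n) (w : Word n) (p : T.Q) (q : U.Q) :
    dsts (prodT T U) w (pst T U p q) = pst T U (dsts T w p) (dsts U (outs T w p) q) := by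
  induction w generalizing p q with
  | nil => rfl
  | cons a w ih =>
    change dsts (prodT T U) w (pst T U (T.tr a p) (dsts U (T.out a p) q)) = _
    rw [ih, ← dsts_append]; rfl

lemma outs_prodT (T U : Transducer n) (w : Word n) (p : T.Q) (q : U.Q) :
    outs (prodT T U) w (pst T U p q) = outs U (outs T w p) q := by
  induction w generalizing p q with
  | nil => rfl
  | cons a w ih =>
    change outs U (T.out a p) q ++
      outs (prodT T U) w (pst T U (T.tr a p) (dsts U (T.out a p) q)) = _
    rw [ih, ← outs_append]; rfl

lemma growth_prodT {T U : Transducer n} (hT : Growth T) (hU : Growth U) :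
    Growth (prodT T U) := by
  intro N
  obtain ⟨K, hK⟩ := hU N
  obtain ⟨L, hL⟩ := hT K
  refine ⟨L, fun w pq hw => ?_⟩
  obtain ⟨p, q, rfl⟩ := pst_cases pq
  rw [outs_prodT]
  exact hK _ _ (hL _ _ hw)

lemma sync_prodT {T U : Transducer n} (hT : Growth T) (sT : StronglySync T)
    (sU : StronglySync U) : StronglySync (prodT T U) := by
  obtain ⟨k, hk⟩ := sT
  obtain ⟨l, hl⟩ := sU
  obtain ⟨K, hK⟩ := hT l
  refine ⟨k + K, fun w hw p q => ?_⟩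
  obtain ⟨p, p', rfl⟩ := pst_cases p
  obtain ⟨q, q', rfl⟩ := pst_cases q
  -- the first `k` letters determine the state of `T`, hence the output of `T` on the other letters
  rw [← List.take_append_drop k w, dsts_append, dsts_append, dsts_prodT T U (w.take k),
    dsts_prodT T U (w.take k), dsts_prodT, dsts_prodT,
    hk (w.take k) (by simp; omega) p q]
  congr 1
  exact hl.mono (hK _ _ (by simp; omega)) _ rfl _ _

lemma hmap_prodT {T U : Transducer n} (hT : Growth T) (hU : Growth U) (p : T.Q) (q : U.Q)
    (x : Seq n) : hmap (prodT T U) (pst T U p q) x = hmap U q (hmap T p x) := by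
  apply hmap_eq (growth_prodT hT hU)
  intro k
  obtain ⟨z, hz⟩ := hmap_prefix T p x k
  rw [hz, hmap_app hU]
  exact ⟨_, by rw [outs_prodT]⟩

/-! ### Cores -/

lemma coreStateE_tr {T : Transducer n} {q : T.Q} (h : CoreStateE T q) (a : A n) :
    CoreStateE T (T.tr a q) := by
  rcases h with ⟨k, w, hs, hw, hq⟩ | h
  · refine Or.inl ⟨k + 1, w ++ [a], hs.mono (by omega), by simp [hw], fun p => ?_⟩
    rw [dsts_append, hq]; rfl
  · exact Or.inr h

lemma coreT_tr (T : Transducer n) (a : A n) (q : (coreT T).Q) :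
    ((coreT T).tr a q).1 = T.tr a q.1 := by
  exact congrArg Subtype.val (dif_pos (coreStateE_tr q.2 a))

lemma dsts_coreT (T : Transducer n) (w : Word n) (q : (coreT T).Q) :
    (dsts (coreT T) w q).1 = dsts T w q.1 := by
  induction w generalizing q with
  | nil => rfl
  | cons a w ih => rw [dsts, dsts, ih, coreT_tr]

lemma outs_coreT (T : Transducer n) (w : Word n) (q : (coreT T).Q) :
    outs (coreT T) w q = outs T w q.1 := by
  induction w generalizing q with
  | nil => rfl
  | cons a w ih => rw [outs, outs, ih, coreT_tr]; rfl

lemma growth_coreT {T : Transducer n} (hT : Growth T) : Growth (coreT T) := by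
  intro N
  obtain ⟨K, hK⟩ := hT N
  exact ⟨K, fun w q hw => by rw [outs_coreT]; exact hK _ _ hw⟩

lemma syncAt_coreT {T : Transducer n} {k : ℕ} (hT : SyncAt T k) : SyncAt (coreT T) k :=
  fun w hw p q => Subtype.ext (by rw [dsts_coreT, dsts_coreT]; exact hT w hw _ _)

lemma sync_coreT {T : Transducer n} (hT : StronglySync T) : StronglySync (coreT T) :=
  let ⟨k, hk⟩ := hT; ⟨k, syncAt_coreT hk⟩

lemma hmap_coreT {T : Transducer n} (hT : Growth T) (q : (coreT T).Q) :
    hmap (coreT T) q = hmap T q.1 := by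
  funext x
  apply hmap_eq (growth_coreT hT)
  intro k
  rw [outs_coreT]
  exact hmap_prefix T q.1 x k

lemma isCore_coreT {T : Transducer n} (hT : StronglySync T) : IsCore (coreT T) := by
  intro q
  rcases q.2 with ⟨k, w, hs, hw, hq⟩ | h
  · exact ⟨k, w, syncAt_coreT hs, hw, fun p => Subtype.ext (by rw [dsts_coreT, hq])⟩
  · obtain ⟨k, hk⟩ := hT
    obtain ⟨p⟩ := T.ne
    exact absurd ⟨k, List.replicate k default, hk, by simp, fun r => hk _ (by simp) r p⟩ (h _)

/-! ### Identifying ω-equivalent states -/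

/-- ω-equivalent states write the same word on every letter. -/
def Compat (T : Transducer n) : Prop :=
  ∀ p q : T.Q, hmap T p = hmap T q → ∀ a, T.out a p = T.out a q

lemma hmap_cons {T : Transducer n} (hT : Growth T) (q : T.Q) (a : A n) (x : Seq n) :
    hmap T q (app [a] x) = app (T.out a q) (hmap T (T.tr a q) x) := by
  rw [hmap_app hT]; simp [outs, dsts]

lemma compat_of_noIncomplete {T : Transducer n} (hT : Growth T) (hN : NoIncomplete T) :
    Compat T := by
  intro p q hpq a
  exact (app_cancel (fun x => by rw [← hmap_cons hT, ← hmap_cons hT, hpq])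
    (hN (T.tr a p)) (hN (T.tr a q))).1

lemma Compat.tr {T : Transducer n} (hT : Growth T) (hC : Compat T) {p q : T.Q}
    (h : hmap T p = hmap T q) (a : A n) : hmap T (T.tr a p) = hmap T (T.tr a q) := by
  funext x
  have h1 := hmap_cons hT p a x
  rw [h, hmap_cons hT, hC p q h] at h1
  exact (app_inj_of_length rfl h1).2.symm

/-- The class of `q` as a state of `quotT T`. -/
def qst (T : Transducer n) (q : T.Q) : (quotT T).Q := Quotient.mk (omegaSetoid T) q

lemma qst_cases {T : Transducer n} (c : (quotT T).Q) : ∃ q, qst T q = c :=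
  Quotient.exists_rep (s := omegaSetoid T) c

lemma quotT_tr {T : Transducer n} (hT : Growth T) (hC : Compat T) (a : A n) (q : T.Q) :
    (quotT T).tr a (qst T q) = qst T (T.tr a q) :=
  Quotient.sound (hC.tr hT (Quotient.mk_out (s := omegaSetoid T) q) a)

lemma quotT_out {T : Transducer n} (hC : Compat T) (a : A n) (q : T.Q) :
    (quotT T).out a (qst T q) = T.out a q :=
  hC _ _ (Quotient.mk_out (s := omegaSetoid T) q) a

lemma dsts_quotT {T : Transducer n} (hT : Growth T) (hC : Compat T) (w : Word n) (q : T.Q) :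
    dsts (quotT T) w (qst T q) =
      qst T (dsts T w q) := by
  induction w generalizing q with
  | nil => rfl
  | cons a w ih => rw [dsts, quotT_tr hT hC, ih, dsts]

lemma outs_quotT {T : Transducer n} (hT : Growth T) (hC : Compat T) (w : Word n) (q : T.Q) :
    outs (quotT T) w (qst T q) = outs T w q := by
  induction w generalizing q with
  | nil => rfl
  | cons a w ih => rw [outs, quotT_tr hT hC, quotT_out hC, ih, outs]

lemma growth_quotT {T : Transducer n} (hT : Growth T) (hC : Compat T) : Growth (quotT T) := by
  intro N
  obtain ⟨K, hK⟩ := hT N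
  refine ⟨K, fun w c hw => ?_⟩
  obtain ⟨q, rfl⟩ := qst_cases c
  rw [outs_quotT hT hC]
  exact hK _ _ hw

lemma sync_quotT {T : Transducer n} (hT : Growth T) (hC : Compat T) (hS : StronglySync T) :
    StronglySync (quotT T) := by
  obtain ⟨k, hk⟩ := hS
  refine ⟨k, fun w hw c d => ?_⟩
  obtain ⟨p, rfl⟩ := qst_cases c
  obtain ⟨q, rfl⟩ := qst_cases d
  rw [dsts_quotT hT hC, dsts_quotT hT hC, hk w hw p q]

lemma hmap_quotT {T : Transducer n} (hT : Growth T) (hC : Compat T) (q : T.Q) :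
    hmap (quotT T) (qst T q) = hmap T q := by
  funext x
  apply hmap_eq (growth_quotT hT hC)
  intro k
  rw [outs_quotT hT hC]
  exact hmap_prefix T q x k

/-! ### Removing incomplete response -/

/-- The state `q`, regarded as a state of `removeIncomplete T`. -/
def rst (T : Transducer n) (q : T.Q) : (removeIncomplete T).Q := q

lemma rst_cases {T : Transducer n} (r : (removeIncomplete T).Q) : ∃ q, rst T q = r := ⟨r, rfl⟩

lemma removeIncomplete_tr (T : Transducer n) (a : A n) (q : T.Q) :
    (removeIncomplete T).tr a (rst T q) = rst T (T.tr a q) := rfl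

lemma removeIncomplete_out_pos {T : Transducer n} (h : ∀ p : T.Q, FiniteExtent T p) (a : A n)
    (q : T.Q) : (removeIncomplete T).out a (rst T q) =
      (T.out a q ++ extentWord T (T.tr a q)).drop (extentLen T q) := if_pos h

lemma removeIncomplete_out_neg {T : Transducer n} (h : ¬ ∀ p : T.Q, FiniteExtent T p) (a : A n)
    (q : T.Q) : (removeIncomplete T).out a (rst T q) = minimalRot (periodicRoot T) := if_neg h

lemma dsts_removeIncomplete (T : Transducer n) (w : Word n) (q : T.Q) :
    dsts (removeIncomplete T) w (rst T q) = rst T (dsts T w q) := by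
  induction w generalizing q with
  | nil => rfl
  | cons a w ih => exact ih _

lemma sync_removeIncomplete {T : Transducer n} (hS : StronglySync T) :
    StronglySync (removeIncomplete T) := by
  obtain ⟨k, hk⟩ := hS
  refine ⟨k, fun w hw p q => ?_⟩
  obtain ⟨p, rfl⟩ := rst_cases p
  obtain ⟨q, rfl⟩ := rst_cases q
  rw [dsts_removeIncomplete, dsts_removeIncomplete, hk w hw p q]

lemma disagree_extentLen {T : Transducer n} {q : T.Q} (h : FiniteExtent T q) :
    Disagree T q (extentLen T q) := by
  classical
  have e : extentLen T q = Nat.find h := by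
    rw [extentLen, dif_pos h]
  rw [e]; exact Nat.find_spec h

lemma agree_of_lt_extentLen {T : Transducer n} {q : T.Q} {j : ℕ} (hj : j < extentLen T q)
    (x y : Seq n) : hmap T q x j = hmap T q y j := by
  classical
  by_cases h : FiniteExtent T q
  · have e : extentLen T q = Nat.find h := by
      rw [extentLen, dif_pos h]
    rw [e] at hj
    have := Nat.find_min h hj
    simp only [Disagree, not_exists, not_not] at this
    exact this x y
  · rw [extentLen, dif_neg h] at hj
    simp at hj

lemma extentWord_length (T : Transducer n) (q : T.Q) :
    (extentWord T q).length = extentLen T q := by simp [extentWord]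

lemma hmap_extentWord (T : Transducer n) (q : T.Q) (x : Seq n) :
    ∃ z, hmap T q x = app (extentWord T q) z := by
  refine ⟨_, eq_app_of_prefix fun j hj => ?_⟩
  rw [extentWord_length] at hj
  have : extentWord T q = pre (hmap T q fun _ => default) (extentLen T q) := rfl
  simp only [this, pre_getElem]
  exact agree_of_lt_extentLen hj _ _

/-- The word dropped in the definition of `removeIncomplete` is `Λ(ε,q)`, because the greatest
common prefix of the outputs from `q` is a prefix of each word `λ(a,q) Λ(ε, π(a,q))`. -/
lemma out_append_extentWord {T : Transducer n} (hT : Growth T)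
    (h : ∀ p : T.Q, FiniteExtent T p) (a : A n) (q : T.Q) :
    T.out a q ++ extentWord T (T.tr a q) =
      extentWord T q ++ (removeIncomplete T).out a (rst T q) := by
  have hle : extentLen T q ≤ (T.out a q ++ extentWord T (T.tr a q)).length := by
    by_contra! hlt
    rw [List.length_append, extentWord_length] at hlt
    obtain ⟨x, y, hxy⟩ := disagree_extentLen (h (T.tr a q))
    have := agree_of_lt_extentLen hlt (app [a] x) (app [a] y)
    rw [hmap_cons hT, hmap_cons hT, app_ge, app_ge] at this
    exact hxy this
  rw [removeIncomplete_out_pos h]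
  conv_lhs => rw [← List.take_append_drop (extentLen T q) (T.out a q ++ _)]
  congr 1
  obtain ⟨z, hz⟩ := hmap_extentWord T (T.tr a q) fun _ => default
  obtain ⟨z', hz'⟩ := hmap_extentWord T q (app [a] fun _ => default)
  rw [hmap_cons hT, hz, ← app_append,
    ← List.take_append_drop (extentLen T q) (T.out a q ++ _), app_append] at hz'
  refine (app_inj_of_length ?_ hz').1
  rw [extentWord_length, List.length_take]
  omega

lemma outs_append_extentWord {T : Transducer n} (hT : Growth T)
    (h : ∀ p : T.Q, FiniteExtent T p) (w : Word n) (q : T.Q) :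
    outs T w q ++ extentWord T (dsts T w q) =
      extentWord T q ++ outs (removeIncomplete T) w (rst T q) := by
  induction w generalizing q with
  | nil => simp [outs, dsts]
  | cons a w ih =>
    rw [outs, dsts, outs, removeIncomplete_tr, List.append_assoc, ih, ← List.append_assoc,
      out_append_extentWord hT h, List.append_assoc]

lemma growth_removeIncomplete_pos {T : Transducer n} (hT : Growth T)
    (h : ∀ p : T.Q, FiniteExtent T p) : Growth (removeIncomplete T) := by
  intro N
  obtain ⟨B, hB⟩ := (Set.finite_range (extentLen T)).bddAbove
  obtain ⟨K, hK⟩ := hT (N + B)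
  refine ⟨K, fun w r hw => ?_⟩
  obtain ⟨q, rfl⟩ := rst_cases r
  have h1 := congrArg List.length (outs_append_extentWord hT h w q)
  have h2 : extentLen T q ≤ B := hB ⟨q, rfl⟩
  have h3 := hK w q hw
  rw [List.length_append, List.length_append, extentWord_length, extentWord_length] at h1
  omega

lemma hmap_removeIncomplete_pos {T : Transducer n} (hT : Growth T)
    (h : ∀ p : T.Q, FiniteExtent T p) (q : T.Q) (x : Seq n) :
    hmap T q x = app (extentWord T q) (hmap (removeIncomplete T) (rst T q) x) := by
  apply hmap_eq hT
  intro k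
  obtain ⟨z, hz⟩ := hmap_prefix (removeIncomplete T) (rst T q) x k
  rw [hz, ← app_append, ← outs_append_extentWord hT h, app_append]
  exact ⟨_, rfl⟩

lemma noIncomplete_removeIncomplete {T : Transducer n} (hT : Growth T)
    (h : ∀ p : T.Q, FiniteExtent T p) : NoIncomplete (removeIncomplete T) := by
  intro r
  obtain ⟨q, rfl⟩ := rst_cases r
  obtain ⟨x, y, hxy⟩ := disagree_extentLen (h q)
  refine ⟨x, y, ?_⟩
  rw [hmap_removeIncomplete_pos hT h, hmap_removeIncomplete_pos hT h,
    ← Nat.add_zero (extentLen T q), ← extentWord_length, app_ge, app_ge] at hxy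
  exact hxy

/-! ### The lexicographically least rotation -/

lemma lexLtB_iff (u v : Word n) : lexLtB u v = true ↔ u < v := by
  induction u generalizing v with
  | nil => cases v <;> simp [lexLtB]
  | cons a u ih =>
    cases v with
    | nil => simp [lexLtB]
    | cons b v =>
      rw [List.cons_lt_cons_iff, lexLtB]
      rcases lt_trichotomy a b with h | rfl | h
      · simp [h]
      · simp [ih]
      · simp [h, h.ne', not_lt.2 h.le]

/-- Selecting the smaller of two words at each step of a fold produces the minimum. -/
lemma foldl_lexLt (l : List (Word n)) (w : Word n) :
    let m := l.foldl (fun acc r => if lexLtB r acc then r else acc) w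
    (m = w ∨ m ∈ l) ∧ m ≤ w ∧ ∀ r ∈ l, m ≤ r := by
  induction l generalizing w with
  | nil => simp
  | cons r l ih =>
    simp only [List.foldl_cons, lexLtB_iff]
    simp only [lexLtB_iff] at ih
    split_ifs with h
    · obtain ⟨h1, h2, h3⟩ := ih r
      refine ⟨Or.inr ?_, h2.trans h.le, ?_⟩
      · rcases h1 with h1 | h1
        · rw [h1]; simp
        · exact List.mem_cons_of_mem _ h1
      · intro s hs
        rcases List.mem_cons.1 hs with rfl | hs
        · exact h2
        · exact h3 s hs
    · obtain ⟨h1, h2, h3⟩ := ih w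
      refine ⟨h1.imp_right (List.mem_cons_of_mem _), h2, ?_⟩
      intro s hs
      rcases List.mem_cons.1 hs with rfl | hs
      · exact h2.trans (not_lt.1 h)
      · exact h3 s hs

lemma rotEq_minimalRot (w : Word n) : RotEq w (minimalRot w) := by
  rcases (foldl_lexLt ((List.range w.length).map fun i => w.rotate i) w).1 with h | h
  · exact ⟨0, by rw [List.rotate_zero]; exact h⟩
  · obtain ⟨i, -, hi⟩ := List.mem_map.1 h
    exact ⟨i, hi.symm⟩

lemma minimalRot_le {u v : Word n} (hu : u ≠ []) (h : RotEq u v) : minimalRot u ≤ v := by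
  obtain ⟨i, rfl⟩ := h
  apply (foldl_lexLt ((List.range u.length).map fun i => u.rotate i) u).2.2
  refine List.mem_map.2 ⟨i % u.length, ?_, List.rotate_mod u i⟩
  exact List.mem_range.2 (Nat.mod_lt _ (List.length_pos_of_ne_nil hu))

lemma RotEq.length {u v : Word n} (h : RotEq u v) : v.length = u.length := by
  obtain ⟨i, rfl⟩ := h; simp

/-! ### Minimal representatives -/

lemma exists_circuit {T : Transducer n} (hC : IsCore T) (q : T.Q) :
    ∃ c : Word n, c ≠ [] ∧ dsts T c q = q := by
  obtain ⟨k, w, hs, hw, hq⟩ := hC q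
  refine ⟨default :: w, by simp, hq _⟩

/-- In a core transducer, either all states have finite extent of incomplete response or all
states induce constant maps. -/
lemma const_of_not_finiteExtent {T : Transducer n} (hT : Growth T) (hC : IsCore T)
    (h : ¬ ∀ p : T.Q, FiniteExtent T p) (q : T.Q) (x y : Seq n) : hmap T q x = hmap T q y := by
  push Not at h
  obtain ⟨p, hp⟩ := h
  simp only [FiniteExtent, Disagree, not_exists, not_not] at hp
  obtain ⟨k, w, hs, hw, hq⟩ := hC q
  have e : app (outs T w p) (hmap T q x) = app (outs T w p) (hmap T q y) := by
    have h1 := hmap_app hT p w x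
    have h2 := hmap_app hT p w y
    rw [hq] at h1 h2
    rw [← h1, ← h2]
    funext j; exact hp j _ _
  exact (app_inj_of_length rfl e).2

/-- When some state has infinite extent of incomplete response, the junk values in the definition
of `periodicRoot` do not occur: a constant map takes its value on a circuit, so the value is
periodic. -/
lemma periodicRoot_spec {T : Transducer n} (hT : Growth T) (hC : IsCore T)
    (h : ¬ ∀ p : T.Q, FiniteExtent T p) : periodicRoot T ≠ [] ∧
      ∃ q x, hmap T q x = per (periodicRoot T) := by
  classical
  obtain ⟨q, hq⟩ : ∃ q, q = Classical.choice T.ne := ⟨_, rfl⟩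
  obtain ⟨c, hc, hcq⟩ := exists_circuit hC q
  have ho := hT.outs_ne_nil hc hcq
  obtain ⟨y, hy⟩ : ∃ y, y = hmap T q fun _ => default := ⟨_, rfl⟩
  have hyper : y = per (outs T c q) := by
    rw [hy, ← hmap_per hT hcq ho]
    exact const_of_not_finiteExtent hT hC h q _ _
  have hp : ∃ m, 0 < m ∧ ∀ j, hmap T (Classical.choice T.ne) (fun _ => default) (j + m) =
      hmap T (Classical.choice T.ne) (fun _ => default) j := by
    rw [← hq, ← hy, hyper]
    exact ⟨_, List.length_pos_of_ne_nil ho, per_add_length _⟩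
  have e : periodicRoot T = pre y (Nat.find hp) := by
    rw [periodicRoot, dif_pos hp, hy, hq, pre]
  obtain ⟨hpos, hper⟩ := Nat.find_spec hp
  replace hper : ∀ j, y (j + Nat.find hp) = y j := by
    intro j
    rw [hy, hq]; exact hper j
  have hne : pre y (Nat.find hp) ≠ [] := by
    apply List.ne_nil_of_length_pos
    rwa [pre_length]
  rw [e]
  refine ⟨hne, q, fun _ => default, ?_⟩
  rw [← hy]
  apply eq_per hne
  conv_lhs => rw [← app_pre y (Nat.find hp)]
  congr 1
  funext j
  simp only [shift]
  rw [add_comm, hper]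

/-- If removing incomplete response changes images only up to tail equivalence and leaves a
transducer on which ω-equivalent states can be identified, then so does passing to the minimal
representative, since taking the core and the quotient does not change the induced maps. -/
lemma minRep_aux {C : Transducer n} (hR : Growth (removeIncomplete C)) (hS : StronglySync C)
    (hcomp : Compat (removeIncomplete C))
    (ht : ∀ q x, TailEq (hmap (removeIncomplete C) (rst C q) x) (hmap C q x)) :
    StronglySync (minRep C) ∧ Growth (minRep C) ∧
      ∀ r x, ∃ q, TailEq (hmap (minRep C) r x) (hmap C q x) := by
  have hR' := growth_coreT hR
  have hcomp' : Compat (coreT (removeIncomplete C)) := by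
    intro p q hpq a
    rw [hmap_coreT hR, hmap_coreT hR] at hpq
    exact hcomp _ _ hpq a
  refine ⟨sync_quotT hR' hcomp' (sync_coreT (sync_removeIncomplete hS)),
    growth_quotT hR' hcomp', fun r x => ?_⟩
  obtain ⟨s, rfl⟩ := qst_cases (T := coreT (removeIncomplete C)) r
  refine ⟨s.1, ?_⟩
  have e : hmap (minRep C) (qst _ s) = hmap (removeIncomplete C) (rst C s.1) :=
    (hmap_quotT hR' hcomp' s).trans (hmap_coreT hR s)
  have := ht s.1 x
  rw [← e] at this
  exact this

/-- The minimal representative acts on tail classes as the original core transducer does. In the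
degenerate case all images lie in the tail class of the periodic sequence spelled by
`periodicRoot C`, hence also by its least rotation. -/
lemma minRep_spec {C : Transducer n} (hT : Growth C) (hS : StronglySync C) (hC : IsCore C) :
    StronglySync (minRep C) ∧ Growth (minRep C) ∧
      ∀ r x, ∃ q, TailEq (hmap (minRep C) r x) (hmap C q x) := by
  by_cases h : ∀ p : C.Q, FiniteExtent C p
  · have hR := growth_removeIncomplete_pos hT h
    refine minRep_aux hR hS (compat_of_noIncomplete hR (noIncomplete_removeIncomplete hT h))
      fun q x => ?_
    rw [hmap_removeIncomplete_pos hT h]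
    exact (tailEq_app _ _).symm
  · obtain ⟨hne, q₀, x₀, h₀⟩ := periodicRoot_spec hT hC h
    have hrot := rotEq_minimalRot (periodicRoot C)
    have hne' : minimalRot (periodicRoot C) ≠ [] := by
      apply List.ne_nil_of_length_pos
      rw [hrot.length]
      exact List.length_pos_of_ne_nil hne
    have houts : ∀ w q, outs (removeIncomplete C) w (rst C q) =
        pw (minimalRot (periodicRoot C)) w.length := by
      intro w
      induction w with
      | nil => intro q; rfl
      | cons a w ih =>
        intro q
        rw [outs, removeIncomplete_out_neg h, removeIncomplete_tr, ih, List.length_cons, pw_succ]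
    have hR : Growth (removeIncomplete C) := fun N => ⟨N, fun w r hw => by
      obtain ⟨q, rfl⟩ := rst_cases r
      rw [houts, pw_length]
      exact hw.trans (Nat.le_mul_of_pos_right _ (List.length_pos_of_ne_nil hne'))⟩
    refine minRep_aux hR hS ?_ fun q x => ?_
    · intro p q _ a
      exact (removeIncomplete_out_neg h a p).trans (removeIncomplete_out_neg h a q).symm
    · have e : hmap (removeIncomplete C) (rst C q) x = per (minimalRot (periodicRoot C)) := by
        apply hmap_eq hR
        intro k
        exact ⟨_, by rw [houts, app_pw_per]⟩
      rw [e]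
      refine (hrot.tailEq hne).symm.trans ?_
      rw [← h₀, const_of_not_finiteExtent hT hC h q₀ x₀ x]
      exact hmap_tailEq hS hT (TailEq.refl _) _ _

/-- The product `TU` in the monoid acts on tail classes as `T` followed by `U`. -/
lemma mulT_spec {T U : Transducer n} (gT : Growth T) (gU : Growth U) (sT : StronglySync T)
    (sU : StronglySync U) : StronglySync (mulT T U) ∧ Growth (mulT T U) ∧
      ∀ r p q x, TailEq (hmap (mulT T U) r x) (hmap U q (hmap T p x)) := by
  have gP := growth_prodT gT gU
  have sP := sync_prodT gT sT sU
  obtain ⟨h1, h2, h3⟩ := minRep_spec (growth_coreT gP) (sync_coreT sP) (isCore_coreT sP)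
  refine ⟨h1, h2, fun r p q x => ?_⟩
  obtain ⟨s, hs⟩ := h3 r x
  refine hs.trans ?_
  rw [hmap_coreT gP, ← hmap_prodT gT gU]
  exact hmap_tailEq sP gP (TailEq.refl _) _ _

/-! ### Breaks of a period in sequences `(a^i b v)^∞` -/

/-- Let `X = h(c c c …)` with `c = a^i b v` a circuit, where `h` is the map of the state `s` and
`h(b ζ)` leaves `h(a a a …)` exactly at position `t` for every `ζ`, and let `r` be a multiple of the
length of the output `α` on `a`. So `X` is `α^i h(b v c c …)`, of period `P`, and it leaves
`h(a a a …)` at position `e + r`. The breaks `j`, where `X j ≠ X (j + r)`, include all `e + k P`, and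
there is none in `[e + k P + L, e + (k + 1) P)`, where `L` is `r` plus the length of the output on
`b v` and so independent of `i`. From position `e + k P + r` on, `X` continues as `h(b v c c …)`
does from position `t` on. -/
lemma break_data {M : Transducer n} (g : Growth M) {s : M.Q} {a b v : Word n}
    (ha : dsts M a s = s) (ha0 : outs M a s ≠ []) {t : ℕ}
    (hlt : ∀ ζ, ∀ j < t, hmap M s (app b ζ) j = hmap M s (per a) j)
    (hne : ∀ ζ, hmap M s (app b ζ) t ≠ hmap M s (per a) t)
    (hbv : dsts M (b ++ v) s = s) {i r e P : ℕ}
    (hr0 : 0 < r) (hr : (outs M a s).length ∣ r) (hri : r ≤ i * (outs M a s).length)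
    (he : e + r = i * (outs M a s).length + t)
    (hP : P = i * (outs M a s).length + (outs M (b ++ v) s).length)
    (hP0 : 0 < P) {X : Seq n} (hX : X = hmap M s (per (pw a i ++ (b ++ v)))) :
    (∀ k, X (e + k * P) ≠ X (e + k * P + r)) ∧
    (∀ k j, e + k * P + ((outs M (b ++ v) s).length + r) ≤ j → j < e + (k + 1) * P →
      X j = X (j + r)) ∧
    (∀ k j, X (e + k * P + r + j) = hmap M s (app (b ++ v) (per (pw a i ++ (b ++ v)))) (t + j)) := by
  obtain ⟨c, hc⟩ : ∃ c, c = pw a i ++ (b ++ v) := ⟨_, rfl⟩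
  rw [← hc] at hX ⊢
  have hperα := hmap_per g ha ha0
  have houtsi := outs_pw ha i
  generalize outs M a s = α at *
  obtain ⟨Z, hZ⟩ : ∃ Z, Z = hmap M s (app (b ++ v) (per c)) := ⟨_, rfl⟩
  rw [← hZ]
  have hcs : dsts M c s = s := by rw [hc, dsts_append, dsts_pw ha, hbv]
  have houtc : outs M c s = pw α i ++ outs M (b ++ v) s := by
    rw [hc, outs_append, houtsi, dsts_pw ha]
  have hlen : (outs M c s).length = P := by
    rw [houtc, List.length_append, pw_length, hP]
  have hXper : X = per (outs M c s) := by
    rw [hX]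
    apply hmap_per g hcs
    apply List.ne_nil_of_length_pos
    omega
  have hmod : ∀ k j, X (j + k * P) = X j := by
    intro k j
    rw [hXper, ← hlen, per_add_mul]
  have hXZ : X = app (pw α i) Z := by
    have hunf : per c = app (pw a i) (app (b ++ v) (per c)) := by
      rw [← app_append]
      conv_lhs => rw [per_eq_app]
      rw [← hc]
    rw [hX, hunf, hmap_app g, houtsi, dsts_pw ha, hZ]
  have hZlt : ∀ j < t, Z j = per α j := by
    intro j hj
    rw [hZ, ← hperα, app_append]
    exact hlt _ j hj
  have hZne : Z t ≠ per α t := by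
    rw [hZ, ← hperα, app_append]
    exact hne _
  have hpw : ∀ j, X (i * α.length + j) = Z j := by
    intro j
    rw [hXZ, ← pw_length, app_ge]
  -- `X` agrees with `per α` exactly up to the position `e + r`
  have hXlt : ∀ j < e + r, X j = per α j := by
    intro j hj
    by_cases hji : j < i * α.length
    · rw [hXZ, ← app_pw_per α i]
      exact app_lt_indep _ _ _ _ (by rwa [pw_length])
    · obtain ⟨m, rfl⟩ := Nat.exists_eq_add_of_le (not_lt.1 hji)
      rw [hpw, hZlt m (by omega), add_comm, per_add_mul]
  have hXne : X (e + r) ≠ per α (e + r) := by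
    rw [he, hpw, add_comm, per_add_mul]
    exact hZne
  obtain ⟨m, rfl⟩ := hr
  have hαr : ∀ j, per α (j + α.length * m) = per α j := by
    intro j; rw [mul_comm, per_add_mul]
  refine ⟨fun k => ?_, fun k j h1 h2 => ?_, fun k j => ?_⟩
  · rw [show e + k * P + α.length * m = e + α.length * m + k * P by ring, hmod, hmod]
    intro h0
    apply hXne
    rw [← h0, hαr]
    exact hXlt e (by omega)
  · obtain ⟨l, rfl⟩ : ∃ l, j = l + (k + 1) * P :=
      ⟨j - (k + 1) * P, by rw [Nat.succ_mul]; omega⟩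
    have hsucc := Nat.succ_mul k P
    rw [show l + (k + 1) * P + α.length * m = l + α.length * m + (k + 1) * P by ring, hmod, hmod,
      hXlt _ (by omega), hXlt _ (by omega), hαr]
  · rw [show e + k * P + α.length * m + j = e + α.length * m + j + k * P by ring, hmod, he,
      add_assoc, hpw]

/-- Two tail equivalent sequences whose breaks of the period `r` come, up to short stretches,
at the positions `e + k P` and `e' + k' P'` can be matched at such positions: in the first
sequence these are breaks preceded by `L` positions without a break, and in the second one no other
breaks have this property. -/
lemma match_breaks {X Y : Seq n} {r L e P e' P' : ℕ} (hP : 0 < P) (hPL : 2 * L ≤ P) (hP' : 0 < P')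
    (hX1 : ∀ k, X (e + k * P) ≠ X (e + k * P + r))
    (hX2 : ∀ k j, e + k * P + L ≤ j → j < e + (k + 1) * P → X j = X (j + r))
    (hY1 : ∀ k, Y (e' + k * P') ≠ Y (e' + k * P' + r))
    (hY2 : ∀ k j, e' + k * P' + L ≤ j → j < e' + (k + 1) * P' → Y j = Y (j + r))
    (h : TailEq X Y) : ∃ k k', ∀ j, X (e + k * P + j) = Y (e' + k' * P' + j) := by
  obtain ⟨a, b, h⟩ := h
  obtain ⟨K, hK⟩ : ∃ K, K = a + e' + 2 * L := ⟨_, rfl⟩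
  have hKP : K ≤ K * P := Nat.le_mul_of_pos_right K hP
  obtain ⟨m, hm⟩ : ∃ m, a + m = e + (K + 1) * P :=
    ⟨e + (K + 1) * P - a, by rw [Nat.succ_mul]; omega⟩
  have hm' := hm
  rw [Nat.succ_mul] at hm'
  have hdm := Nat.div_add_mod (b + m - e') P'
  have hmod := Nat.mod_lt (b + m - e') hP'
  obtain ⟨k', hk'⟩ : ∃ k', k' = (b + m - e') / P' := ⟨_, rfl⟩
  rw [← hk', mul_comm] at hdm
  have hlow : e' + k' * P' ≤ b + m := by omega
  have hupp : b + m < e' + (k' + 1) * P' := by rw [Nat.succ_mul]; omega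
  -- the break `e + (K + 1) P` of `X` corresponds to the break `b + m` of `Y`, which lies in the
  -- `k'`-th period of `Y`
  refine ⟨K + 1, k', fun j => ?_⟩
  suffices heq : e' + k' * P' = b + m by
    rw [heq, ← hm, add_assoc, add_assoc, h]
  by_contra hne
  have hYm : Y (b + m) ≠ Y (b + m + r) := by
    rw [add_assoc, ← h, ← h, ← add_assoc, hm]
    exact hX1 _
  by_cases hL : e' + k' * P' + L ≤ b + m
  · exact hYm (hY2 k' _ hL hupp)
  · -- otherwise the break `e' + k' P'` of `Y` would lie less than `L` before `b + m`, giving a break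
    -- of `X` in the unbroken stretch before `e + (K + 1) P`
    obtain ⟨l, hl⟩ : ∃ l, e' + k' * P' = b + l := ⟨e' + k' * P' - b, by omega⟩
    apply hY1 k'
    rw [hl, add_assoc, ← h, ← h, ← add_assoc]
    exact hX2 K _ (by omega) (by rw [Nat.succ_mul]; omega)

/-! ### Injectivity for states of complete response -/

/-- Long prefixes of `x` determine the first `N` letters of its image, uniformly in `x` and the
state. -/
lemma hmap_agree {T : Transducer n} (g : Growth T) (N : ℕ) : ∃ K, ∀ (x : Seq n) (k : ℕ), K ≤ k →
    ∀ (p : T.Q), N ≤ (outs T (pre x k) p).length ∧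
      ∀ z, ∀ j < N, hmap T p (app (pre x k) z) j = hmap T p x j := by
  obtain ⟨K, hK⟩ := g N
  refine ⟨K, fun x k hk p => ?_⟩
  have h1 := hK (pre x k) p (by simpa using hk)
  refine ⟨h1, fun z j hj => ?_⟩
  conv_rhs => rw [← app_pre x k]
  rw [hmap_app g, hmap_app g]
  exact app_lt_indep _ _ _ _ (by omega)

/-- If `w` forces the states `p` of `T` and `q` of `U`, then every sequence `x` can be approximated
by a word that is a circuit at both states. -/
lemma approx {T U : Transducer n} (gT : Growth T) (gU : Growth U) {p : T.Q} {q : U.Q} {w : Word n}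
    (hp : ∀ v p', dsts T (v ++ w) p' = p) (hq : ∀ v q', dsts U (v ++ w) q' = q)
    (x : Seq n) (N : ℕ) : ∃ v : Word n, v ≠ [] ∧ dsts T v p = p ∧ dsts U v q = q ∧
      N ≤ (outs T v p).length ∧ N ≤ (outs U v q).length ∧
      (∀ z, ∀ j < N, hmap T p (app v z) j = hmap T p x j) ∧
      (∀ z, ∀ j < N, hmap U q (app v z) j = hmap U q x j) := by
  obtain ⟨K, hK⟩ := hmap_agree gT N
  obtain ⟨L, hL⟩ := hmap_agree gU N
  have h1 := hK x (K + L + 1) (by omega) p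
  have h2 := hL x (K + L + 1) (by omega) q
  refine ⟨pre x (K + L + 1) ++ w, ?_, hp _ _, hq _ _, ?_, ?_, ?_, ?_⟩
  · apply List.ne_nil_of_length_pos
    rw [List.length_append, pre_length]
    omega
  · rw [outs_append, List.length_append]
    exact h1.1.trans (Nat.le_add_right _ _)
  · rw [outs_append, List.length_append]
    exact h2.1.trans (Nat.le_add_right _ _)
  · intro z j hj
    rw [app_append]
    exact h1.2 _ j hj
  · intro z j hj
    rw [app_append]
    exact h2.2 _ j hj

/-- With `c = a^i b v` for fixed `a`, `b` and large `i`, tail equivalence of the two images of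
`c c c …` aligns the position where the image under `T` leaves `h(a a a …)` with the one where the
image under `U` does. Here these positions are the beginning of the image of `b v …` for `T` and
`t` letters later for `U`. -/
lemma align {T U : Transducer n} (gT : Growth T) (gU : Growth U) {p : T.Q} {q : U.Q}
    {a b v : Word n} {t : ℕ} (ha : a ≠ []) (haT : dsts T a p = p) (haU : dsts U a q = q)
    (hneT : ∀ ζ, hmap T p (app b ζ) 0 ≠ hmap T p (per a) 0)
    (hltU : ∀ ζ, ∀ j < t, hmap U q (app b ζ) j = hmap U q (per a) j)
    (hneU : ∀ ζ, hmap U q (app b ζ) t ≠ hmap U q (per a) t)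
    (hT : dsts T (b ++ v) p = p) (hU : dsts U (b ++ v) q = q)
    (H : ∀ c : Word n, c ≠ [] → TailEq (hmap T p (per c)) (hmap U q (per c))) :
    ∃ ζ, ∀ j, hmap T p (app b (app v ζ)) j = hmap U q (app b (app v ζ)) (t + j) := by
  have haT0 := gT.outs_ne_nil ha haT
  have haU0 := gU.outs_ne_nil ha haU
  obtain ⟨m, hm⟩ : ∃ m, m = (outs T a p).length := ⟨_, rfl⟩
  obtain ⟨m', hm'⟩ : ∃ m', m' = (outs U a q).length := ⟨_, rfl⟩
  have hm0 : 0 < m := hm ▸ List.length_pos_of_ne_nil haT0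
  have hm0' : 0 < m' := hm' ▸ List.length_pos_of_ne_nil haU0
  have hr0 : 0 < m * m' := Nat.mul_pos hm0 hm0'
  obtain ⟨r, hr⟩ : ∃ r, r = m * m' := ⟨_, rfl⟩
  rw [← hr] at hr0
  obtain ⟨l, hl⟩ : ∃ l, l = (outs T (b ++ v) p).length := ⟨_, rfl⟩
  obtain ⟨l', hl'⟩ : ∃ l', l' = (outs U (b ++ v) q).length := ⟨_, rfl⟩
  -- large enough for both images to have period at least `2 (l + l' + r)`, where `l + l' + r` bounds
  -- the parts of a period with uncontrolled breaks
  obtain ⟨i, hi⟩ : ∃ i, i = r + 2 * (l + l' + r) := ⟨_, rfl⟩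
  have him : i ≤ i * m := Nat.le_mul_of_pos_right i hm0
  have him' : i ≤ i * m' := Nat.le_mul_of_pos_right i hm0'
  have hc : pw a i ++ (b ++ v) ≠ [] := by
    have := Nat.le_mul_of_pos_right i (List.length_pos_of_ne_nil ha)
    apply List.ne_nil_of_length_pos
    rw [List.length_append, pw_length]
    omega
  obtain ⟨hX1, hX2, hX3⟩ := break_data gT haT haT0 (t := 0) (by simp) hneT hT
    (i := i) (r := r) (e := i * m - r) (P := i * m + l) hr0 (by rw [← hm, hr]; exact ⟨m', rfl⟩)
    (by rw [← hm]; omega) (by rw [← hm]; omega) (by rw [← hm, ← hl]) (by omega) rfl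
  obtain ⟨hY1, hY2, hY3⟩ := break_data gU haU haU0 hltU hneU hU
    (i := i) (r := r) (e := i * m' + t - r) (P := i * m' + l') hr0
    (by rw [← hm', hr]; exact ⟨m, mul_comm _ _⟩)
    (by rw [← hm']; omega) (by rw [← hm']; omega) (by rw [← hm', ← hl']) (by omega) rfl
  rw [← hl] at hX2
  rw [← hl'] at hY2
  obtain ⟨k, k', h⟩ := match_breaks (L := l + l' + r) (by omega) (by omega) (by omega) hX1
    (fun k j h1 h2 => hX2 k j (by omega) h2) hY1 (fun k j h1 h2 => hY2 k j (by omega) h2) (H _ hc)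
  refine ⟨per (pw a i ++ (b ++ v)), fun j => ?_⟩
  have hX := hX3 k j
  rw [zero_add, add_assoc, h, ← add_assoc, hY3, app_append] at hX
  exact hX.symm

/-- States of complete response forced by a common word, whose maps agree up to tail equivalence on
periodic sequences, induce the same map. -/
lemma hmap_eq_of_tailEq {T U : Transducer n} (gT : Growth T) (gU : Growth U) {p : T.Q} {q : U.Q}
    {w : Word n} (hp : ∀ v p', dsts T (v ++ w) p' = p) (hq : ∀ v q', dsts U (v ++ w) q' = q)
    (dT : Disagree T p 0) (dU : Disagree U q 0)
    (H : ∀ c : Word n, c ≠ [] → TailEq (hmap T p (per c)) (hmap U q (per c))) :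
    hmap T p = hmap U q := by
  obtain ⟨x0, y0, hxy⟩ := dT
  obtain ⟨a, ha, haT, haU, -, -, haxT, -⟩ := approx gT gU hp hq x0 1
  obtain ⟨b0, -, hbT, hbU, hbl, -, hbyT, -⟩ := approx gT gU hp hq y0 1
  have haper : hmap T p (per a) 0 = hmap T p x0 0 := by
    rw [per_eq_app]; exact haxT _ 0 one_pos
  obtain ⟨n0, hn0⟩ : ∃ n0, n0 = (outs U b0 q).length := ⟨_, rfl⟩
  -- `z` is chosen so that the image of `b0 z …` under `U` leaves that of `a a a …`
  obtain ⟨z, hzT, hzU, hzl, hz⟩ : ∃ z : Word n, dsts T z p = p ∧ dsts U z q = q ∧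
      1 ≤ (outs U z q).length ∧ ∀ ζ, hmap U q (app z ζ) 0 ≠ hmap U q (per a) n0 := by
    obtain ⟨x1, y1, hxy1⟩ := dU
    obtain ⟨z, hz⟩ : ∃ z, hmap U q z 0 ≠ hmap U q (per a) n0 := by
      by_cases h : hmap U q x1 0 = hmap U q (per a) n0
      · exact ⟨y1, fun h' => hxy1 (h.trans h'.symm)⟩
      · exact ⟨x1, h⟩
    obtain ⟨u, -, huT, huU, -, hul, -, hux⟩ := approx gT gU hp hq z 1
    exact ⟨u, huT, huU, hul, fun ζ => by rw [hux ζ 0 one_pos]; exact hz⟩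
  obtain ⟨b, hb⟩ : ∃ b, b = b0 ++ z := ⟨_, rfl⟩
  have hbT' : dsts T b p = p := by rw [hb, dsts_append, hbT, hzT]
  have hbU' : dsts U b q = q := by rw [hb, dsts_append, hbU, hzU]
  have hblen : n0 < (outs U b q).length := by
    rw [hb, outs_append, List.length_append, hbU]; omega
  have hbn0 : hmap U q (app b (per a)) n0 ≠ hmap U q (per a) n0 := by
    rw [hb, app_append, hmap_app gU, hbU]
    have := app_ge (outs U b0 q) (hmap U q (app z (per a))) 0
    rw [add_zero, ← hn0] at this
    rw [this]
    exact hz _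
  have hneT : ∀ ζ, hmap T p (app b ζ) 0 ≠ hmap T p (per a) 0 := by
    intro ζ
    rw [haper, hb, app_append, hbyT _ 0 one_pos]
    exact hxy.symm
  obtain ⟨t, htn, hltU, hneU⟩ : ∃ t, t ≤ n0 ∧
      (∀ ζ, ∀ j < t, hmap U q (app b ζ) j = hmap U q (per a) j) ∧
      (∀ ζ, hmap U q (app b ζ) t ≠ hmap U q (per a) t) := by
    classical
    have hex : ∃ t, hmap U q (app b (per a)) t ≠ hmap U q (per a) t := ⟨n0, hbn0⟩
    have hle : Nat.find hex ≤ n0 := Nat.find_min' hex hbn0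
    have hind : ∀ ζ, ∀ j ≤ Nat.find hex, hmap U q (app b ζ) j = hmap U q (app b (per a)) j := by
      intro ζ j hj
      rw [hmap_app gU, hmap_app gU]
      exact app_lt_indep _ _ _ _ (by omega)
    refine ⟨Nat.find hex, hle, fun ζ j hj => ?_, fun ζ => ?_⟩
    · rw [hind ζ j hj.le]
      exact not_not.1 (Nat.find_min hex hj)
    · rw [hind ζ _ le_rfl]
      exact Nat.find_spec hex
  have key : ∀ x j, hmap T p (app b x) j = hmap U q (app b x) (t + j) := by
    intro x j
    obtain ⟨v, -, hvT, hvU, -, -, hvxT, hvxU⟩ := approx gT gU hp hq x (t + j + 1)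
    obtain ⟨ζ, hζ⟩ := align gT gU (v := v) ha haT haU hneT hltU hneU
      (by rw [dsts_append, hbT', hvT]) (by rw [dsts_append, hbU', hvU]) H
    have h := hζ j
    rw [hmap_app gT, hmap_app gU, hbT', hbU', app_congr _ (hvxT ζ) j (by omega),
      app_congr _ (hvxU ζ) (t + j) (by omega)] at h
    rw [hmap_app gT, hmap_app gU, hbT', hbU', h]
  have key' : ∀ x, app (outs U b q) (hmap U q x) =
      app (pre (hmap U q (per a)) t ++ outs T b p) (hmap T p x) := by
    intro x
    have hT := hmap_app gT p b x
    have hU := hmap_app gU q b x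
    rw [hbT'] at hT
    rw [hbU'] at hU
    rw [app_append, ← hT, ← hU]
    funext j
    by_cases hj : j < t
    · rw [app_lt _ _ _ (by simpa using hj), pre_getElem, hltU x j hj]
    · obtain ⟨i, rfl⟩ := Nat.exists_eq_add_of_le (not_lt.1 hj)
      rw [← key, app_ge' _ _ _ (by simp)]
      simp
  exact funext fun x => ((app_cancel key' dU ⟨x0, y0, hxy⟩).2 x).symm

/-! ### Degenerate transducers -/

lemma hmap_Zword {x : Word n} (hx : x ≠ []) (q : (Zword x).Q) (y : Seq n) :
    hmap (Zword x) q y = per x := by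
  have houts : ∀ (w : Word n) (q : (Zword x).Q), outs (Zword x) w q = pw x w.length := by
    intro w
    induction w with
    | nil => intro q; rfl
    | cons a w ih =>
      intro q
      rw [outs, ih, List.length_cons, pw_succ]
      rfl
  have g : Growth (Zword x) := by
    intro N
    refine ⟨N, fun w q hw => ?_⟩
    rw [houts, pw_length]
    exact hw.trans (Nat.le_mul_of_pos_right _ (List.length_pos_of_ne_nil hx))
  apply hmap_eq g
  intro k
  exact ⟨per x, by rw [houts, app_pw_per]⟩

/-- A state of complete response does not send all periodic sequences to a single tail class. -/
lemma not_const_of_disagree {U : Transducer n} (gU : Growth U) {q : U.Q} {w : Word n}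
    (hq : ∀ v q', dsts U (v ++ w) q' = q) (dU : Disagree U q 0) (x : Word n) (hx : x ≠ [])
    (H : ∀ c : Word n, c ≠ [] → TailEq (per x) (hmap U q (per c))) : False := by
  obtain ⟨x0, y0, hxy⟩ := dU
  obtain ⟨a, ha, haU, -, -, -, hax, -⟩ := approx gU gU hq hq x0 1
  obtain ⟨b, hb, hbU, -, -, -, hby, -⟩ := approx gU gU hq hq y0 1
  have ha0 := gU.outs_ne_nil ha haU
  have hb0 := gU.outs_ne_nil hb hbU
  have hne : ∀ ζ, hmap U q (app b ζ) 0 ≠ hmap U q (per a) 0 := by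
    intro ζ
    rw [per_eq_app, hax _ 0 one_pos, hby _ 0 one_pos]
    exact hxy.symm
  obtain ⟨m, hm⟩ : ∃ m, m = (outs U a q).length := ⟨_, rfl⟩
  have hm0 : 0 < m := hm ▸ List.length_pos_of_ne_nil ha0
  obtain ⟨l, hl⟩ : ∃ l, l = (outs U b q).length := ⟨_, rfl⟩
  have hl0 : 0 < l := hl ▸ List.length_pos_of_ne_nil hb0
  have hr0 : 0 < m * x.length := Nat.mul_pos hm0 (List.length_pos_of_ne_nil hx)
  obtain ⟨r, hr⟩ : ∃ r, r = m * x.length := ⟨_, rfl⟩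
  rw [← hr] at hr0
  have hrm : r ≤ r * m := Nat.le_mul_of_pos_right r hm0
  obtain ⟨hX1, -, -⟩ := break_data gU haU ha0 (v := []) (t := 0) (by simp) hne
    (by rw [List.append_nil, hbU]) (i := r) (r := r) (e := r * m - r) (P := r * m + l) hr0
    (by rw [← hm, hr]; exact ⟨x.length, rfl⟩) (by rw [← hm]; exact hrm) (by rw [← hm]; omega)
    (by rw [← hm, List.append_nil, ← hl]) (by omega) rfl
  obtain ⟨u, v, h⟩ := H (pw a r ++ (b ++ [])) (by simp [hb])
  have hvP : v ≤ v * (r * m + l) := Nat.le_mul_of_pos_right v (by omega)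
  obtain ⟨s, hs⟩ : ∃ s, r * m - r + v * (r * m + l) = v + s :=
    ⟨r * m - r + v * (r * m + l) - v, by omega⟩
  -- far enough to the right, the image of `per c` has period `|x|` and hence no break
  apply hX1 v
  rw [hs, add_assoc, ← h, ← h, ← add_assoc, hr, per_add_mul]

/-! ### Injectivity -/

/-- Every state of a core transducer `T` is forced by a word that also forces a state of `U`. -/
lemma exists_forcing {T U : Transducer n} (hT : IsCore T) (hU : StronglySync U) (p : T.Q) :
    ∃ (q : U.Q) (w : Word n), (∀ v p', dsts T (v ++ w) p' = p) ∧
      ∀ v q', dsts U (v ++ w) q' = q := by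
  obtain ⟨k, w, -, -, hw⟩ := hT p
  obtain ⟨l, hl⟩ := hU
  obtain ⟨q0⟩ := U.ne
  refine ⟨dsts U (List.replicate l default ++ w) q0, List.replicate l default ++ w,
    fun v p' => ?_, fun v q' => ?_⟩
  · rw [← List.append_assoc, dsts_append, hw]
  · rw [dsts_append]
    exact hl.mono (Nat.le_add_right l w.length) _ (by simp) _ _

lemma tailEq_of_piAct {T U : Transducer n} (sT : StronglySync T) (gT : Growth T)
    (sU : StronglySync U) (gU : Growth U)
    (h : ∀ Γ : Word n, IsPrime Γ → RotEq (PiAct T Γ) (PiAct U Γ)) (p : T.Q) (q : U.Q)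
    (c : Word n) (hc : c ≠ []) : TailEq (hmap T p (per c)) (hmap U q (per c)) := by
  obtain ⟨hp, he⟩ := primeRoot_spec hc
  rw [he]
  obtain ⟨h1, h2⟩ := piAct_spec sT gT hp.1
  obtain ⟨-, h4⟩ := piAct_spec sU gU hp.1
  exact (h2 p).trans (((h _ hp).tailEq h1.1).trans (h4 q).symm)

lemma omegaEq_of_exists {T U : Transducer n} (mT : WeaklyMinimal T) (mU : WeaklyMinimal U)
    (h1 : ∀ p, ∃ q, hmap T p = hmap U q) (h2 : ∀ q, ∃ p, hmap T p = hmap U q) :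
    OmegaEq T U := by
  choose f hf using h1
  refine ⟨Equiv.ofBijective f ⟨fun p p' h => mT _ _ ?_, fun q => ?_⟩, hf⟩
  · rw [hf, hf, h]
  · obtain ⟨p, hp⟩ := h2 q
    exact ⟨p, mU _ _ (by rw [← hf, hp])⟩

lemma omegaEq_of_tailEq {T U : Transducer n} (hT : MnMem T) (hU : MnMem U)
    (H : ∀ p q (c : Word n), c ≠ [] → TailEq (hmap T p (per c)) (hmap U q (per c))) :
    OmegaEq T U := by
  obtain ⟨cT, sT, coT, hT⟩ := hT
  obtain ⟨cU, sU, coU, hU⟩ := hU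
  have gT := cT.growth
  have gU := cU.growth
  obtain ⟨p0⟩ := T.ne
  obtain ⟨q0⟩ := U.ne
  rcases hT with ⟨nT, mT⟩ | ⟨x, hx, hxm, f, hf⟩
  · rcases hU with ⟨nU, mU⟩ | ⟨y, hy, -, g, hg⟩
    · apply omegaEq_of_exists mT mU
      · intro p
        obtain ⟨q, w, hp, hq⟩ := exists_forcing coT sU p
        exact ⟨q, hmap_eq_of_tailEq gT gU hp hq (nT p) (nU q) (H p q)⟩
      · intro q
        obtain ⟨p, w, hq, hp⟩ := exists_forcing coU sT q
        exact ⟨p, hmap_eq_of_tailEq gT gU hp hq (nT p) (nU q) (H p q)⟩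
    · exfalso
      obtain ⟨-, w, hp, -⟩ := exists_forcing coT sT p0
      refine not_const_of_disagree gT hp (nT p0) y hy.1 fun c hc => ?_
      have h := H p0 q0 c hc
      rw [hg, hmap_Zword hy.1] at h
      exact h.symm
  · rcases hU with ⟨nU, mU⟩ | ⟨y, hy, hym, g, hg⟩
    · exfalso
      obtain ⟨-, w, hq, -⟩ := exists_forcing coU sU q0
      refine not_const_of_disagree gU hq (nU q0) x hx.1 fun c hc => ?_
      have h := H p0 q0 c hc
      rwa [hf, hmap_Zword hx.1] at h
    · have h := H p0 q0 [default] (by simp)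
      rw [hf, hg, hmap_Zword hx.1, hmap_Zword hy.1] at h
      have hxy : x = y := by
        apply le_antisymm
        · rw [← hxm]
          exact minimalRot_le hx.1 (rotEq_of_tailEq hx hy h)
        · rw [← hym]
          exact minimalRot_le hy.1 (rotEq_of_tailEq hy hx h.symm)
      subst hxy
      exact ⟨f.trans g.symm, fun p => by
        funext s
        rw [hf, hg, hmap_Zword hx.1, hmap_Zword hx.1]⟩

/-- The map `Π` from `M_n` to the monoid of transformations of the set
of rotation classes of prime words is an injective monoid homomorphism: for `T ∈ M_n`,
`Π(T)` is well defined on rotation classes and sends prime words to prime words;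
`Π(TU) = Π(T)` followed by `Π(U)` for all `T, U ∈ M_n`; and `Π(T) = Π(U)` implies `T = U`
(ω-equality, which is equality in `M_n`). -/
theorem Pi_injective_hom (n : ℕ) :
    ∀ T U : Transducer n, MnMem T → MnMem U →
      (∀ Γ Δ : Word n, IsPrime Γ → IsPrime Δ → RotEq Γ Δ →
        RotEq (PiAct T Γ) (PiAct T Δ)) ∧
      (∀ Γ : Word n, IsPrime Γ → IsPrime (PiAct T Γ)) ∧
      (∀ Γ : Word n, IsPrime Γ →
        RotEq (PiAct (mulT T U) Γ) (PiAct U (PiAct T Γ))) ∧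
      ((∀ Γ : Word n, IsPrime Γ → RotEq (PiAct T Γ) (PiAct U Γ)) → OmegaEq T U) := by
  intro T U hT hU
  have sT := hT.2.1
  have sU := hU.2.1
  have gT := hT.1.growth
  have gU := hU.1.growth
  obtain ⟨p⟩ := T.ne
  obtain ⟨q⟩ := U.ne
  refine ⟨fun Γ Δ hΓ hΔ h => ?_, fun Γ hΓ => (piAct_spec sT gT hΓ.1).1, fun Γ hΓ => ?_,
    fun h => omegaEq_of_tailEq hT hU (tailEq_of_piAct sT gT sU gU h)⟩
  · obtain ⟨h1, h2⟩ := piAct_spec sT gT hΓ.1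
    obtain ⟨h3, h4⟩ := piAct_spec sT gT hΔ.1
    exact rotEq_of_tailEq h1 h3
      ((h2 p).symm.trans ((hmap_tailEq sT gT (h.tailEq hΓ.1) p p).trans (h4 p)))
  · obtain ⟨sM, gM, hM⟩ := mulT_spec gT gU sT sU
    obtain ⟨r⟩ := (mulT T U).ne
    obtain ⟨h1, h2⟩ := piAct_spec sM gM hΓ.1
    obtain ⟨h3, h4⟩ := piAct_spec sT gT hΓ.1
    obtain ⟨h5, h6⟩ := piAct_spec sU gU h3.1
    exact rotEq_of_tailEq h1 h5 ((h2 r).symm.trans ((hM r p q _).trans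
      ((hmap_tailEq sU gU (h4 p) q q).trans (h6 q))))

end ShiftPaper
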